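/- arXiv:1210.4950 — 9 statements merged into one kernel-verified Lean document; each statement's English description precedes it below -/
import Mathlib

section
/- For every real α > 0, the function φ_α(r) = ((1+α²)/(r²+α²))^{1/2} satisfies the radial Lichnerowicz–York equation φ''(r) + (2/r)·φ'(r) + 2π·ρ(α)·φ(r)^5 = 0 for all r ∈ (0,1], where ρ(α) = (3/(2π))·(α/(1+α²))², and moreover φ_α(1) = 1, φ_α'(0) = 0 (the derivative of φ_α at r = 0 exists and equals 0), and φ_α(r) ≥ 1 for all r ∈ [0,1]. -/
/-- The one-parameter family of conformal factors
`φ_α(r) = ((1+α²)/(r²+α²))^{1/2}`. -/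
noncomputable def phiLY (α r : ℝ) : ℝ := Real.sqrt ((1 + α ^ 2) / (r ^ 2 + α ^ 2))

/-- The energy density `ρ(α) = (3/(2π))·(α/(1+α²))²`. -/
noncomputable def rhoLY (α : ℝ) : ℝ := 3 / (2 * Real.pi) * (α / (1 + α ^ 2)) ^ 2

/-!
In dimension `n`, the radial Laplacian of `(r² + b) ^ p` is
`2p (r² + b) ^ (p - 2) ((n + 2p - 2) r² + n b)`. The `r²` term drops out exactly for
`p = 1 - n / 2`, leaving a pure power of `r² + b`. For `n = 3` the exponents before and after are
`-1 / 2` and `-5 / 2`, so the Laplacian of a multiple of `(r² + α²) ^ (-1 / 2)` is proportional to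
its fifth power.
-/

/-- The Laplacian `u'' + ((n - 1) / r) u'` of a radial function on `n`-dimensional Euclidean space,
as an operator on the radial profile `u`. The dimension may be any real number; at `r = 0` the
first-order term is `0` by the convention for division. -/
noncomputable def radialLaplacian (n : ℝ) (u : ℝ → ℝ) (r : ℝ) : ℝ :=
  deriv (deriv u) r + (n - 1) / r * deriv u r

theorem radialLaplacian_const_mul (n c : ℝ) (u : ℝ → ℝ) (r : ℝ) :
    radialLaplacian n (fun x => c * u x) r = c * radialLaplacian n u r := by
  have hderiv (v : ℝ → ℝ) : deriv (fun x => c * v x) = fun x => c * deriv v x :=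
    funext fun _ => deriv_const_mul_field c
  simp only [radialLaplacian, hderiv]
  ring

section SqAddRpow

variable {b r : ℝ}

theorem hasDerivAt_sq_add_rpow (p : ℝ) (h : r ^ 2 + b ≠ 0) :
    HasDerivAt (fun x : ℝ => (x ^ 2 + b) ^ p) (2 * p * r * (r ^ 2 + b) ^ (p - 1)) r := by
  have hbase : HasDerivAt (fun x : ℝ => x ^ 2 + b) (2 * r) r := by
    simpa using (hasDerivAt_pow 2 r).add_const b
  exact (hbase.rpow_const (Or.inl h)).congr_deriv (by ring)

theorem deriv_deriv_sq_add_rpow (p : ℝ) (h : r ^ 2 + b ≠ 0) :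
    deriv (deriv fun x : ℝ => (x ^ 2 + b) ^ p) r =
      2 * p * (r ^ 2 + b) ^ (p - 1) + 4 * p * (p - 1) * r ^ 2 * (r ^ 2 + b) ^ (p - 2) := by
  have hfirst : deriv (fun x : ℝ => (x ^ 2 + b) ^ p) =ᶠ[nhds r]
      fun x => 2 * p * x * (x ^ 2 + b) ^ (p - 1) := by
    have hcont : ContinuousAt (fun x : ℝ => x ^ 2 + b) r := by fun_prop
    filter_upwards [hcont.eventually_ne h] with x hx
    exact (hasDerivAt_sq_add_rpow p hx).deriv
  have hsecond := ((hasDerivAt_id' r).const_mul (2 * p)).fun_mul (hasDerivAt_sq_add_rpow (p - 1) h)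
  rw [hfirst.deriv_eq, hsecond.deriv, sub_sub, one_add_one_eq_two]
  ring

theorem radialLaplacian_sq_add_rpow (n p : ℝ) (hr : r ≠ 0) (h : r ^ 2 + b ≠ 0) :
    radialLaplacian n (fun x => (x ^ 2 + b) ^ p) r =
      2 * p * (r ^ 2 + b) ^ (p - 2) * ((n + 2 * p - 2) * r ^ 2 + n * b) := by
  have hpow : (r ^ 2 + b) ^ (p - 1) = (r ^ 2 + b) ^ (p - 2) * (r ^ 2 + b) := by
    rw [← Real.rpow_add_one h]
    ring_nf
  rw [radialLaplacian, deriv_deriv_sq_add_rpow p h, (hasDerivAt_sq_add_rpow p h).deriv, hpow]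
  field_simp
  ring

theorem radialLaplacian_sq_add_rpow_one_sub_half (n : ℝ) (hr : r ≠ 0) (h : r ^ 2 + b ≠ 0) :
    radialLaplacian n (fun x => (x ^ 2 + b) ^ (1 - n / 2)) r =
      -(n * (n - 2) * b * (r ^ 2 + b) ^ (-1 - n / 2)) := by
  rw [radialLaplacian_sq_add_rpow n _ hr h, show 1 - n / 2 - 2 = -1 - n / 2 by ring]
  ring

end SqAddRpow

theorem phiLY_eq_sqrt_mul_rpow (α : ℝ) :
    phiLY α = fun r => √(1 + α ^ 2) * (r ^ 2 + α ^ 2) ^ (-1 / 2 : ℝ) := by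
  funext r
  rw [phiLY, Real.sqrt_div (by positivity), div_eq_mul_inv, Real.sqrt_eq_rpow (r ^ 2 + α ^ 2),
    ← Real.rpow_neg (by positivity), neg_div]

theorem phiLY_pow_five (α r : ℝ) :
    phiLY α r ^ 5 = (1 + α ^ 2) ^ 2 * √(1 + α ^ 2) * (r ^ 2 + α ^ 2) ^ (-5 / 2 : ℝ) := by
  have hsqrt : √(1 + α ^ 2) ^ 5 = (1 + α ^ 2) ^ 2 * √(1 + α ^ 2) := by
    rw [pow_succ, pow_mul _ 2 2, Real.sq_sqrt (by positivity)]
  have hrpow : ((r ^ 2 + α ^ 2) ^ (-1 / 2 : ℝ)) ^ 5 = (r ^ 2 + α ^ 2) ^ (-5 / 2 : ℝ) := by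
    rw [← Real.rpow_mul_natCast (by positivity)]
    norm_num
  rw [phiLY_eq_sqrt_mul_rpow, mul_pow, hsqrt, hrpow]

theorem two_pi_mul_rhoLY (α : ℝ) : 2 * Real.pi * rhoLY α = 3 * (α / (1 + α ^ 2)) ^ 2 := by
  rw [rhoLY]
  field_simp

theorem radialLaplacian_three_phiLY (α : ℝ) {r : ℝ} (hr : r ≠ 0) :
    radialLaplacian 3 (phiLY α) r = -(2 * Real.pi * rhoLY α * phiLY α r ^ 5) := by
  have hbase : r ^ 2 + α ^ 2 ≠ 0 := by positivity
  have hcritical : radialLaplacian 3 (fun x => (x ^ 2 + α ^ 2) ^ (-1 / 2 : ℝ)) r =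
      -(3 * α ^ 2 * (r ^ 2 + α ^ 2) ^ (-5 / 2 : ℝ)) := by
    convert radialLaplacian_sq_add_rpow_one_sub_half 3 hr hbase using 4 <;> norm_num
  rw [phiLY_pow_five, two_pi_mul_rhoLY, phiLY_eq_sqrt_mul_rpow, radialLaplacian_const_mul,
    hcritical]
  field_simp

theorem phiLY_one (α : ℝ) : phiLY α 1 = 1 := by
  rw [phiLY, one_pow, div_self (by positivity), Real.sqrt_one]

theorem hasDerivAt_phiLY_zero {α : ℝ} (hα : α ≠ 0) : HasDerivAt (phiLY α) 0 0 := by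
  have hbase : (0 : ℝ) ^ 2 + α ^ 2 ≠ 0 := by positivity
  rw [phiLY_eq_sqrt_mul_rpow]
  simpa using (hasDerivAt_sq_add_rpow (-1 / 2) hbase).const_mul √(1 + α ^ 2)

theorem one_le_phiLY {α r : ℝ} (hα : α ≠ 0) (hr : |r| ≤ 1) : 1 ≤ phiLY α r := by
  rw [phiLY, Real.one_le_sqrt, one_le_div (by positivity)]
  gcongr
  exact (sq_le_one_iff_abs_le_one r).mpr hr

/-- For every `α > 0`, `φ_α` solves the radial Lichnerowicz–York equation
`φ'' + (2/r)φ' + 2πρ(α)φ⁵ = 0` on `(0,1]`, satisfies the boundary conditions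
`φ_α(1) = 1` and `φ_α'(0) = 0`, and satisfies `φ_α(r) ≥ 1` on `[0,1]`. -/
theorem lichnerowicz_york_solution_family (α : ℝ) (hα : 0 < α) :
    (∀ r ∈ Set.Ioc (0 : ℝ) 1,
      deriv (deriv (phiLY α)) r + (2 / r) * deriv (phiLY α) r
        + 2 * Real.pi * rhoLY α * phiLY α r ^ 5 = 0) ∧
    phiLY α 1 = 1 ∧
    HasDerivAt (phiLY α) 0 0 ∧
    (∀ r ∈ Set.Icc (0 : ℝ) 1, 1 ≤ phiLY α r) := by
  refine ⟨fun r hr => ?_, phiLY_one α, hasDerivAt_phiLY_zero hα.ne',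
    fun r hr => one_le_phiLY hα.ne' ((abs_of_nonneg hr.1).trans_le hr.2)⟩
  have hlap := radialLaplacian_three_phiLY α hr.1.ne'
  rw [radialLaplacian, show (3 : ℝ) - 1 = 2 by norm_num] at hlap
  rw [hlap, neg_add_cancel]
end

section
/- Let q : [0,1] → ℝ be continuous and let μ₁ ≠ μ_k be real numbers. Suppose θ₁ and θ_k are continuously differentiable on [0,1], twice differentiable on (0,1], satisfy θ'' + (2/r)θ' + q(r)θ = −μθ on (0,1] with μ = μ₁ and μ = μ_k respectively, satisfy θ(1) = 0 and θ'(0) = 0, and suppose θ₁(r) > 0 for all r ∈ [0,1) while θ_k is not identically zero. Then θ_k has a node, i.e., there exists r₀ ∈ (0,1) with θ_k(r₀) = 0. -/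
/-!
Multiplying the radial equation by `r ^ 2` puts it in Sturm–Liouville form
`(r ^ 2 θ')' + r ^ 2 (q + μ) θ = 0`. By Lagrange's identity the weighted Wronskian
`r ^ 2 (θ₁' θ_k - θ_k' θ₁)` then has derivative `(μ_k - μ₁) r ^ 2 θ₁ θ_k`. It vanishes at `0`
because of the weight and at `1` because of the boundary condition, so by Rolle's theorem
`θ₁ θ_k` vanishes somewhere in between, where `θ₁` does not.
-/

section SturmLiouville

open Set

/-- The Wronskian of `u` and `v` weighted by the leading coefficient `p` of a Sturm–Liouville
equation `(p u')' + Q u = 0`, with the sign for which Lagrange's identity reads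
`W' = (p u')' v - (p v')' u`. -/
noncomputable def weightedWronskian (p u v : ℝ → ℝ) (x : ℝ) : ℝ :=
  p x * (deriv u x * v x - deriv v x * u x)

theorem continuousOn_weightedWronskian {p u v : ℝ → ℝ} {t : Set ℝ} (hp : ContinuousOn p t)
    (hu : ContinuousOn u t) (hu' : ContinuousOn (deriv u) t)
    (hv : ContinuousOn v t) (hv' : ContinuousOn (deriv v) t) :
    ContinuousOn (weightedWronskian p u v) t :=
  hp.mul ((hu'.mul hv).sub (hv'.mul hu))

theorem hasDerivAt_weightedWronskian {p u v : ℝ → ℝ} {x U V : ℝ}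
    (hu : DifferentiableAt ℝ u x) (hpu : HasDerivAt (fun y ↦ p y * deriv u y) U x)
    (hv : DifferentiableAt ℝ v x) (hpv : HasDerivAt (fun y ↦ p y * deriv v y) V x) :
    HasDerivAt (weightedWronskian p u v) (U * v x - V * u x) x := by
  have hW : weightedWronskian p u v =
      fun y ↦ p y * deriv u y * v y - p y * deriv v y * u y := by
    ext y
    rw [weightedWronskian]
    ring
  rw [hW]
  exact ((hpu.fun_mul hv.hasDerivAt).fun_sub (hpv.fun_mul hu.hasDerivAt)).congr_deriv (by ring)

theorem exists_mul_eq_zero_of_weightedWronskian_eq {p u v Q₁ Q₂ : ℝ → ℝ} {a b : ℝ}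
    (hab : a < b) (hW : ContinuousOn (weightedWronskian p u v) (Icc a b))
    (hWab : weightedWronskian p u v a = weightedWronskian p u v b)
    (hu : DifferentiableOn ℝ u (Ioo a b)) (hv : DifferentiableOn ℝ v (Ioo a b))
    (hpu : ∀ x ∈ Ioo a b, HasDerivAt (fun y ↦ p y * deriv u y) (-(Q₁ x * u x)) x)
    (hpv : ∀ x ∈ Ioo a b, HasDerivAt (fun y ↦ p y * deriv v y) (-(Q₂ x * v x)) x)
    (hQ : ∀ x ∈ Ioo a b, Q₁ x ≠ Q₂ x) :
    ∃ c ∈ Ioo a b, u c * v c = 0 := by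
  obtain ⟨c, hc, hWc⟩ := exists_hasDerivAt_eq_zero hab hW hWab fun x hx ↦
    have hx' : Ioo a b ∈ nhds x := Ioo_mem_nhds hx.1 hx.2
    hasDerivAt_weightedWronskian (hu.differentiableAt hx') (hpu x hx)
      (hv.differentiableAt hx') (hpv x hx)
  have hprod : (Q₂ c - Q₁ c) * (u c * v c) = 0 := by linear_combination hWc
  exact ⟨c, hc, (mul_eq_zero.mp hprod).resolve_left (sub_ne_zero.mpr (hQ c hc).symm)⟩

end SturmLiouville

section Radial

open Set

variable {s μ μ₁ μ₂ R r : ℝ} {q θ θ₁ θ₂ : ℝ → ℝ}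

theorem hasDerivAt_rpow_mul {g : ℝ → ℝ} {g' : ℝ} (hr : 0 < r) (hg : HasDerivAt g g' r) :
    HasDerivAt (fun y ↦ y ^ s * g y) (r ^ s * (g' + s / r * g r)) r := by
  refine ((Real.hasDerivAt_rpow_const (Or.inl hr.ne')).fun_mul hg).congr_deriv ?_
  rw [Real.rpow_sub_one hr.ne']
  ring

/-- `θ` solves the radial eigenvalue equation `θ'' + (s / r) θ' + q θ = -μ θ` on `(0, R)` and is
`C¹` up to the end points; for `s = n - 1` this is the equation of radial functions on the ball
of radius `R` in dimension `n`. No boundary conditions are included. Since `deriv` is required to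
be continuous on the closed interval, its values at `0` and `R` are the one-sided derivatives. -/
structure IsRadialSolution (s R : ℝ) (q : ℝ → ℝ) (μ : ℝ) (θ : ℝ → ℝ) : Prop where
  continuousOn : ContinuousOn θ (Icc 0 R)
  continuousOn_deriv : ContinuousOn (deriv θ) (Icc 0 R)
  differentiableOn : DifferentiableOn ℝ θ (Ioo 0 R)
  differentiableOn_deriv : DifferentiableOn ℝ (deriv θ) (Ioo 0 R)
  ode : ∀ r ∈ Ioo 0 R, deriv (deriv θ) r + (s / r) * deriv θ r + q r * θ r = -μ * θ r

theorem IsRadialSolution.of_Ioc (hθ : DifferentiableOn ℝ θ (Icc 0 R))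
    (hθ' : ContinuousOn (deriv θ) (Icc 0 R)) (hθ'' : DifferentiableOn ℝ (deriv θ) (Ioc 0 R))
    (hode : ∀ r ∈ Ioc 0 R, deriv (deriv θ) r + (s / r) * deriv θ r + q r * θ r = -μ * θ r) :
    IsRadialSolution s R q μ θ where
  continuousOn := hθ.continuousOn
  continuousOn_deriv := hθ'
  differentiableOn := hθ.mono Ioo_subset_Icc_self
  differentiableOn_deriv := hθ''.mono Ioo_subset_Ioc_self
  ode r hr := hode r (Ioo_subset_Ioc_self hr)

theorem IsRadialSolution.hasDerivAt_rpow_mul_deriv (h : IsRadialSolution s R q μ θ)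
    (hr : r ∈ Ioo 0 R) :
    HasDerivAt (fun y ↦ y ^ s * deriv θ y) (-(r ^ s * (q r + μ) * θ r)) r := by
  have hθ' := (h.differentiableOn_deriv.differentiableAt (Ioo_mem_nhds hr.1 hr.2)).hasDerivAt
  refine (hasDerivAt_rpow_mul hr.1 hθ').congr_deriv ?_
  linear_combination r ^ s * h.ode r hr

/-- `hbc` is what a common Dirichlet, Neumann or Robin condition at `R` amounts to. -/
theorem higher_eigenfunction_has_node_general (hs : 0 < s) (hR : 0 < R) (hμ : μ₁ ≠ μ₂)
    (h₁ : IsRadialSolution s R q μ₁ θ₁) (h₂ : IsRadialSolution s R q μ₂ θ₂)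
    (hbc : deriv θ₁ R * θ₂ R = deriv θ₂ R * θ₁ R) (hne : ∀ r ∈ Ioo 0 R, θ₁ r ≠ 0) :
    ∃ r₀ ∈ Ioo 0 R, θ₂ r₀ = 0 := by
  have hW := continuousOn_weightedWronskian (Real.continuous_rpow_const hs.le).continuousOn
    h₁.continuousOn h₁.continuousOn_deriv h₂.continuousOn h₂.continuousOn_deriv
  have hWends : weightedWronskian (· ^ s) θ₁ θ₂ 0 = weightedWronskian (· ^ s) θ₁ θ₂ R := by
    simp [weightedWronskian, Real.zero_rpow hs.ne', hbc]
  have hQ : ∀ r ∈ Ioo 0 R, r ^ s * (q r + μ₁) ≠ r ^ s * (q r + μ₂) := fun r hr ↦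
    (mul_right_injective₀ (Real.rpow_pos_of_pos hr.1 s).ne').ne ((add_right_injective (q r)).ne hμ)
  obtain ⟨c, hc, hprod⟩ := exists_mul_eq_zero_of_weightedWronskian_eq hR hW hWends
    h₁.differentiableOn h₂.differentiableOn (fun _ ↦ h₁.hasDerivAt_rpow_mul_deriv)
    (fun _ ↦ h₂.hasDerivAt_rpow_mul_deriv) hQ
  exact ⟨c, hc, (mul_eq_zero.mp hprod).resolve_left (hne c hc)⟩

end Radial

/-- If `θ₁` is a positive (principal) eigenfunction and `θ_k` a not identically zero
eigenfunction of the radial Schrödinger operator `θ ↦ −(θ'' + (2/r)θ' + qθ)` with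
boundary conditions `θ(1) = 0`, `θ'(0) = 0`, for distinct eigenvalues `μ₁ ≠ μ_k`,
then `θ_k` has a node: it vanishes at some interior point `r₀ ∈ (0,1)`. -/
theorem higher_eigenfunction_has_node (q θ1 θk : ℝ → ℝ) (μ1 μk : ℝ)
    (hq : ContinuousOn q (Set.Icc 0 1))
    (hμ : μ1 ≠ μk)
    (h11 : DifferentiableOn ℝ θ1 (Set.Icc 0 1))
    (h11' : ContinuousOn (deriv θ1) (Set.Icc 0 1))
    (h12 : DifferentiableOn ℝ (deriv θ1) (Set.Ioc 0 1))
    (h1ode : ∀ r ∈ Set.Ioc (0 : ℝ) 1,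
      deriv (deriv θ1) r + (2 / r) * deriv θ1 r + q r * θ1 r = -μ1 * θ1 r)
    (h1bc1 : θ1 1 = 0) (h1bc0 : deriv θ1 0 = 0)
    (h1pos : ∀ r ∈ Set.Ico (0 : ℝ) 1, 0 < θ1 r)
    (hk1 : DifferentiableOn ℝ θk (Set.Icc 0 1))
    (hk1' : ContinuousOn (deriv θk) (Set.Icc 0 1))
    (hk2 : DifferentiableOn ℝ (deriv θk) (Set.Ioc 0 1))
    (hkode : ∀ r ∈ Set.Ioc (0 : ℝ) 1,
      deriv (deriv θk) r + (2 / r) * deriv θk r + q r * θk r = -μk * θk r)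
    (hkbc1 : θk 1 = 0) (hkbc0 : deriv θk 0 = 0)
    (hkne : ∃ r ∈ Set.Icc (0 : ℝ) 1, θk r ≠ 0) :
    ∃ r₀ ∈ Set.Ioo (0 : ℝ) 1, θk r₀ = 0 :=
  higher_eigenfunction_has_node_general two_pos one_pos hμ
    (.of_Ioc h11 h11' h12 h1ode) (.of_Ioc hk1 hk1' hk2 hkode)
    (by rw [h1bc1, hkbc1, mul_zero, mul_zero])
    fun r hr ↦ (h1pos r (Set.Ioo_subset_Ico_self hr)).ne'
end

section
/- Every function f : [0,1] → ℝ that is continuously differentiable on [0,1], twice differentiable on (0,1], and satisfies f''(r) + (2/r)·f'(r) + (15/(1+r²)²)·f(r) = 0 on (0,1] with f(1) = 0 and f'(0) = 0, is a scalar multiple of θ₁(r) = (1−r²)/(1+r²)^{3/2}. Hence the kernel of the linearization of the radial Lichnerowicz–York equation at the critical solution (α = 1, ρ_c = 3/(8π)) is one-dimensional. -/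
/-- The principal eigenfunction `θ₁(r) = (1−r²)/(1+r²)^{3/2}`. -/
noncomputable def theta1 (r : ℝ) : ℝ := (1 - r ^ 2) / (1 + r ^ 2) ^ ((3 : ℝ) / 2)

/-!
The damping coefficient `2 / r` is singular at `0` but nonnegative, so it only helps the energy
estimate for `f ^ 2 + f' ^ 2`: by Grönwall's inequality a solution is determined by its Cauchy data
at the singular point. Since `θ₁ 0 = 1` and `f' 0 = 0 = θ₁' 0`, the solutions `f` and `f 0 • θ₁`
have the same data there.
-/

open Set

/-- `f`, with derivative `f'`, is a solution of `y'' + p y' + q y = 0` on the open interval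
`(a, b)` that is `C¹` up to the endpoints. The equation is imposed only on the open interval, so
`p` and `q` may be singular at the endpoints. -/
structure IsLinearODESolution (p q f f' : ℝ → ℝ) (a b : ℝ) : Prop where
  continuousOn : ContinuousOn f (Icc a b)
  continuousOn_deriv : ContinuousOn f' (Icc a b)
  hasDerivAt : ∀ x ∈ Ioo a b, HasDerivAt f (f' x) x
  hasDerivAt_deriv : ∀ x ∈ Ioo a b, HasDerivAt f' (-(p x * f' x) - q x * f x) x

-- `le_gronwallBound_of_liminf_deriv_right_le` does not apply: at a singular endpoint `a` the energy
-- of a solution may have no right derivative.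
theorem le_mul_exp_of_hasDerivAt_le {E E' : ℝ → ℝ} {K a b : ℝ} (hE : ContinuousOn E (Icc a b))
    (hE' : ∀ x ∈ Ioo a b, HasDerivAt E (E' x) x) (hle : ∀ x ∈ Ioo a b, E' x ≤ K * E x)
    {x : ℝ} (hx : x ∈ Icc a b) : E x ≤ E a * Real.exp (K * (x - a)) := by
  have hderiv : ∀ y ∈ Ioo a b, HasDerivAt (fun y ↦ E y * Real.exp (-(K * (y - a))))
      ((E' y - K * E y) * Real.exp (-(K * (y - a)))) y := fun y hy ↦ by
    have hexp := ((((hasDerivAt_id y).sub_const a).const_mul K).neg).exp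
    exact ((hE' y hy).mul hexp).congr_deriv (by simp only [Pi.neg_apply, id]; ring)
  have hanti : AntitoneOn (fun y ↦ E y * Real.exp (-(K * (y - a)))) (Icc a b) := by
    refine antitoneOn_of_hasDerivWithinAt_nonpos (convex_Icc a b) (by fun_prop)
      (fun y hy ↦ (hderiv y (interior_Icc (a := a) ▸ hy)).hasDerivWithinAt) fun y hy ↦ ?_
    rw [interior_Icc] at hy
    exact mul_nonpos_of_nonpos_of_nonneg (sub_nonpos.2 (hle y hy)) (Real.exp_pos _).le
  have hdecay : E x * Real.exp (-(K * (x - a))) ≤ E a := by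
    simpa using hanti (left_mem_Icc.2 (hx.1.trans hx.2)) hx hx.1
  rwa [Real.exp_neg, ← div_eq_mul_inv, div_le_iff₀ (Real.exp_pos _)] at hdecay

namespace IsLinearODESolution

variable {p q f f' g g' : ℝ → ℝ} {a b M : ℝ}

theorem of_deriv (hf : ContinuousOn f (Icc a b)) (hf' : ContinuousOn (deriv f) (Icc a b))
    (hd : DifferentiableOn ℝ f (Ioo a b)) (hd' : DifferentiableOn ℝ (deriv f) (Ioo a b))
    (hode : ∀ x ∈ Ioo a b, deriv (deriv f) x + p x * deriv f x + q x * f x = 0) :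
    IsLinearODESolution p q f (deriv f) a b where
  continuousOn := hf
  continuousOn_deriv := hf'
  hasDerivAt _ hx := (hd.differentiableAt (isOpen_Ioo.mem_nhds hx)).hasDerivAt
  hasDerivAt_deriv x hx :=
    (hd'.differentiableAt (isOpen_Ioo.mem_nhds hx)).hasDerivAt.congr_deriv
      (by linarith [hode x hx])

theorem const_mul (c : ℝ) (hf : IsLinearODESolution p q f f' a b) :
    IsLinearODESolution p q (fun x ↦ c * f x) (fun x ↦ c * f' x) a b where
  continuousOn := hf.continuousOn.const_mul c
  continuousOn_deriv := hf.continuousOn_deriv.const_mul c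
  hasDerivAt x hx := (hf.hasDerivAt x hx).const_mul c
  hasDerivAt_deriv x hx := ((hf.hasDerivAt_deriv x hx).const_mul c).congr_deriv (by ring)

theorem sub (hf : IsLinearODESolution p q f f' a b) (hg : IsLinearODESolution p q g g' a b) :
    IsLinearODESolution p q (fun x ↦ f x - g x) (fun x ↦ f' x - g' x) a b where
  continuousOn := hf.continuousOn.sub hg.continuousOn
  continuousOn_deriv := hf.continuousOn_deriv.sub hg.continuousOn_deriv
  hasDerivAt x hx := (hf.hasDerivAt x hx).sub (hg.hasDerivAt x hx)
  hasDerivAt_deriv x hx :=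
    ((hf.hasDerivAt_deriv x hx).sub (hg.hasDerivAt_deriv x hx)).congr_deriv (by ring)

theorem energy_le (hf : IsLinearODESolution p q f f' a b) (hp : ∀ x ∈ Ioo a b, 0 ≤ p x)
    (hq : ∀ x ∈ Ioo a b, |q x| ≤ M) {x : ℝ} (hx : x ∈ Icc a b) :
    f x ^ 2 + f' x ^ 2 ≤ (f a ^ 2 + f' a ^ 2) * Real.exp ((1 + M) * (x - a)) := by
  have hderiv : ∀ y ∈ Ioo a b, HasDerivAt (fun y ↦ f y ^ 2 + f' y ^ 2)
      ((1 - q y) * (2 * f y * f' y) - 2 * (p y * f' y ^ 2)) y := fun y hy ↦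
    (((hf.hasDerivAt y hy).pow 2).add ((hf.hasDerivAt_deriv y hy).pow 2)).congr_deriv
      (by norm_num; ring)
  have hcont : ContinuousOn (fun y ↦ f y ^ 2 + f' y ^ 2) (Icc a b) :=
    (hf.continuousOn.pow 2).add (hf.continuousOn_deriv.pow 2)
  refine le_mul_exp_of_hasDerivAt_le hcont hderiv (fun y hy ↦ ?_) hx
  have hdamping : 0 ≤ p y * f' y ^ 2 := mul_nonneg (hp y hy) (sq_nonneg _)
  have hcoeff : |1 - q y| ≤ 1 + M := by
    simpa using (abs_sub 1 (q y)).trans (add_le_add_right (hq y hy) |1|)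
  have hamgm : |2 * f y * f' y| ≤ f y ^ 2 + f' y ^ 2 :=
    abs_le.2 ⟨by linarith [sq_nonneg (f y + f' y)], two_mul_le_add_sq _ _⟩
  have hcross : (1 - q y) * (2 * f y * f' y) ≤ (1 + M) * (f y ^ 2 + f' y ^ 2) :=
    (le_abs_self _).trans <| (abs_mul _ _).trans_le <|
      mul_le_mul hcoeff hamgm (abs_nonneg _) ((abs_nonneg _).trans hcoeff)
  linarith

theorem eqOn_Icc (hf : IsLinearODESolution p q f f' a b) (hg : IsLinearODESolution p q g g' a b)
    (hp : ∀ x ∈ Ioo a b, 0 ≤ p x) (hq : ∀ x ∈ Ioo a b, |q x| ≤ M)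
    (ha : f a = g a) (ha' : f' a = g' a) : EqOn f g (Icc a b) := fun x hx ↦ by
  have henergy : (f x - g x) ^ 2 + (f' x - g' x) ^ 2 ≤ 0 := by
    simpa [ha, ha'] using (hf.sub hg).energy_le hp hq hx
  have hsq : (f x - g x) ^ 2 = 0 :=
    le_antisymm (by linarith [sq_nonneg (f' x - g' x)]) (sq_nonneg _)
  exact sub_eq_zero.1 (pow_eq_zero_iff two_ne_zero |>.1 hsq)

end IsLinearODESolution

theorem hasDerivAt_one_add_sq (x : ℝ) : HasDerivAt (fun x : ℝ ↦ 1 + x ^ 2) (2 * x) x := by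
  simpa using (hasDerivAt_pow 2 x).const_add 1

theorem hasDerivAt_one_add_sq_rpow (s x : ℝ) :
    HasDerivAt (fun x : ℝ ↦ (1 + x ^ 2) ^ s) (2 * s * x * (1 + x ^ 2) ^ s / (1 + x ^ 2)) x := by
  have hpos : 0 < 1 + x ^ 2 := by positivity
  refine ((hasDerivAt_one_add_sq x).rpow_const (p := s) (Or.inl hpos.ne')).congr_deriv ?_
  rw [Real.rpow_sub_one hpos.ne']
  ring

/-- The derivative of `theta1`, as an explicit function. -/
noncomputable def theta1Deriv (r : ℝ) : ℝ :=
  (r ^ 3 - 5 * r) / ((1 + r ^ 2) * (1 + r ^ 2) ^ ((3 : ℝ) / 2))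

theorem hasDerivAt_theta1 (r : ℝ) : HasDerivAt theta1 (theta1Deriv r) r := by
  have hnum : HasDerivAt (fun r : ℝ ↦ 1 - r ^ 2) (-(2 * r)) r := by
    simpa using (hasDerivAt_pow 2 r).const_sub 1
  have hden : (1 + r ^ 2) ^ ((3 : ℝ) / 2) ≠ 0 := by positivity
  refine (hnum.div (hasDerivAt_one_add_sq_rpow (3 / 2) r) hden).congr_deriv ?_
  rw [theta1Deriv]
  field_simp
  ring

theorem hasDerivAt_theta1Deriv {r : ℝ} (hr : r ≠ 0) :
    HasDerivAt theta1Deriv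
      (-(2 / r * theta1Deriv r) - 15 / (1 + r ^ 2) ^ 2 * theta1 r) r := by
  have hnum : HasDerivAt (fun r : ℝ ↦ r ^ 3 - 5 * r) (3 * r ^ 2 - 5) r :=
    ((hasDerivAt_pow 3 r).sub ((hasDerivAt_id r).const_mul 5)).congr_deriv (by norm_num)
  have hden : (1 + r ^ 2) * (1 + r ^ 2) ^ ((3 : ℝ) / 2) ≠ 0 := by positivity
  refine (hnum.div ((hasDerivAt_one_add_sq r).mul (hasDerivAt_one_add_sq_rpow (3 / 2) r))
    hden).congr_deriv ?_
  rw [theta1Deriv, theta1]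
  simp only [Pi.mul_apply]
  field_simp
  ring

theorem continuous_theta1Deriv : Continuous theta1Deriv := by
  have hden (r : ℝ) : (1 + r ^ 2) * (1 + r ^ 2) ^ ((3 : ℝ) / 2) ≠ 0 := by positivity
  have hrpow : Continuous fun r : ℝ ↦ (1 + r ^ 2) ^ ((3 : ℝ) / 2) :=
    continuous_iff_continuousAt.2 fun r ↦ (hasDerivAt_one_add_sq_rpow _ r).continuousAt
  exact Continuous.div (by fun_prop) (by fun_prop) hden

theorem isLinearODESolution_theta1 (b : ℝ) :
    IsLinearODESolution (fun r ↦ 2 / r) (fun r ↦ 15 / (1 + r ^ 2) ^ 2) theta1 theta1Deriv 0 b where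
  continuousOn r _ := (hasDerivAt_theta1 r).continuousAt.continuousWithinAt
  continuousOn_deriv := continuous_theta1Deriv.continuousOn
  hasDerivAt r _ := hasDerivAt_theta1 r
  hasDerivAt_deriv _ hr := hasDerivAt_theta1Deriv hr.1.ne'

theorem kernel_one_dimensional_general {f f' : ℝ → ℝ} {b : ℝ}
    (hf : IsLinearODESolution (fun r ↦ 2 / r) (fun r ↦ 15 / (1 + r ^ 2) ^ 2) f f' 0 b)
    (hf'0 : f' 0 = 0) : ∃ c : ℝ, ∀ r ∈ Icc 0 b, f r = c * theta1 r := by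
  have hdamping : ∀ r ∈ Ioo 0 b, 0 ≤ 2 / r := fun r hr ↦ div_nonneg zero_le_two hr.1.le
  have hpotential : ∀ r ∈ Ioo 0 b, |15 / (1 + r ^ 2) ^ 2| ≤ 15 := fun r _ ↦ by
    rw [abs_of_nonneg (by positivity)]
    exact div_le_self (by norm_num) (one_le_pow₀ (le_add_of_nonneg_right (sq_nonneg r)))
  exact ⟨f 0, hf.eqOn_Icc ((isLinearODESolution_theta1 b).const_mul (f 0)) hdamping hpotential
    (by simp [theta1]) (by simp [hf'0, theta1Deriv])⟩

/-- Every solution `f` of the linearized equation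
`f'' + (2/r)f' + (15/(1+r²)²)f = 0` on `(0,1]` with `f(1) = 0` and `f'(0) = 0`
is a scalar multiple of `θ₁(r) = (1−r²)/(1+r²)^{3/2}`: the kernel of the
linearization at the critical solution is one-dimensional. -/
theorem kernel_one_dimensional (f : ℝ → ℝ)
    (hf1 : DifferentiableOn ℝ f (Set.Icc 0 1))
    (hf1' : ContinuousOn (deriv f) (Set.Icc 0 1))
    (hf2 : DifferentiableOn ℝ (deriv f) (Set.Ioc 0 1))
    (hode : ∀ r ∈ Set.Ioc (0 : ℝ) 1,
      deriv (deriv f) r + (2 / r) * deriv f r + (15 / (1 + r ^ 2) ^ 2) * f r = 0)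
    (hbc1 : f 1 = 0) (hbc0 : deriv f 0 = 0) :
    ∃ c : ℝ, ∀ r ∈ Set.Icc (0 : ℝ) 1, f r = c * theta1 r :=
  kernel_one_dimensional_general (.of_deriv hf1.continuousOn hf1' (hf1.mono Ioo_subset_Icc_self)
    (hf2.mono Ioo_subset_Ioc_self) fun r hr ↦ hode r (Ioo_subset_Ioc_self hr)) hbc0
end

section
/- Let a, b : [0,1] → ℝ be continuous with a(r) ≥ b(r) for all r ∈ [0,1] and a(r₀) > b(r₀) for some r₀ ∈ [0,1). Suppose θ_a and θ_b are continuously differentiable on [0,1], twice differentiable on (0,1], positive on [0,1), satisfy θ_a'' + (2/r)θ_a' + a(r)θ_a = −μ_a θ_a and θ_b'' + (2/r)θ_b' + b(r)θ_b = −μ_b θ_b on (0,1], and satisfy θ(1) = 0 and θ'(0) = 0. Then μ_a < μ_b. -/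
/-!
Multiplying the equation by `r ^ 2` puts it in divergence form, `(r²θ')' = -r²(a + μ)θ`.
The Lagrange bracket `W = r²(θa'θb - θaθb')` then satisfies `W' = r²(b - a + μb - μa)θaθb` and
vanishes at both ends: at `0` by the Neumann conditions, at `1` by the Dirichlet conditions.
If `μb ≤ μa`, then `W' ≤ 0`, so `W` is constant and `W' = 0`; since `θaθb > 0`, this forces
`a = b` on `(0, 1)`, hence on `[0, 1]` by continuity.
-/

open Set

theorem eqOn_zero_of_hasDerivAt_nonpos {f f' : ℝ → ℝ} {l r : ℝ}
    (hf : ContinuousOn f (Icc l r)) (hf' : ∀ x ∈ Ioo l r, HasDerivAt f (f' x) x)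
    (hnonpos : ∀ x ∈ Ioo l r, f' x ≤ 0) (hle : f l ≤ f r) :
    EqOn f' 0 (Ioo l r) := by
  have hanti : AntitoneOn f (Icc l r) := by
    refine antitoneOn_of_hasDerivWithinAt_nonpos (convex_Icc l r) hf (f' := f') ?_ ?_ <;>
      rw [interior_Icc]
    exacts [fun x hx ↦ (hf' x hx).hasDerivWithinAt, hnonpos]
  intro x hx
  have hlr : l ≤ r := (hx.1.trans hx.2).le
  have hconst : ∀ y ∈ Icc l r, f y = f l := fun y hy ↦
    le_antisymm (hanti (left_mem_Icc.2 hlr) hy hy.1)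
      (hle.trans (hanti hy (right_mem_Icc.2 hlr) hy.2))
  have hev : f =ᶠ[nhds x] fun _ ↦ f l :=
    Filter.eventually_of_mem (Icc_mem_nhds hx.1 hx.2) hconst
  exact (hf' x hx).unique ((hasDerivAt_const x (f l)).congr_of_eventuallyEq hev)

/-- The Lagrange bracket `p (u' v - u v')` of `u` and `v` for the Sturm–Liouville operator
`u ↦ -(p u')'`, used to compare solutions with different potentials. The derivatives `u'` and `v'`
are separate arguments, so that at an endpoint they can be given one-sided values. -/
def lagrangeBracket (p u u' v v' : ℝ → ℝ) (x : ℝ) : ℝ :=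
  p x * (u' x * v x - u x * v' x)

section SturmLiouville

variable {p u u' v v' Q₁ Q₂ : ℝ → ℝ}

theorem hasDerivAt_lagrangeBracket {x P Q : ℝ}
    (hu : HasDerivAt u (u' x) x) (hpu : HasDerivAt (fun y ↦ p y * u' y) P x)
    (hv : HasDerivAt v (v' x) x) (hpv : HasDerivAt (fun y ↦ p y * v' y) Q x) :
    HasDerivAt (lagrangeBracket p u u' v v') (P * v x - u x * Q) x := by
  have hW : lagrangeBracket p u u' v v' = fun y ↦ p y * u' y * v y - u y * (p y * v' y) := by
    funext y
    simp only [lagrangeBracket]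
    ring
  rw [hW]
  exact ((hpu.fun_mul hv).fun_sub (hu.fun_mul hpv)).congr_deriv (by ring)

theorem continuousOn_lagrangeBracket {s : Set ℝ} (hp : ContinuousOn p s)
    (hu : ContinuousOn u s) (hu' : ContinuousOn u' s)
    (hv : ContinuousOn v s) (hv' : ContinuousOn v' s) :
    ContinuousOn (lagrangeBracket p u u' v v') s :=
  hp.mul ((hu'.mul hv).sub (hu.mul hv'))

theorem eqOn_potential_of_lagrangeBracket_le {l r : ℝ}
    (hu : ∀ x ∈ Ioo l r, HasDerivAt u (u' x) x)
    (hpu : ∀ x ∈ Ioo l r, HasDerivAt (fun y ↦ p y * u' y) (-(Q₁ x * u x)) x)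
    (hupos : ∀ x ∈ Ioo l r, 0 < u x)
    (hv : ∀ x ∈ Ioo l r, HasDerivAt v (v' x) x)
    (hpv : ∀ x ∈ Ioo l r, HasDerivAt (fun y ↦ p y * v' y) (-(Q₂ x * v x)) x)
    (hvpos : ∀ x ∈ Ioo l r, 0 < v x)
    (hQ : ∀ x ∈ Ioo l r, Q₂ x ≤ Q₁ x)
    (hW : ContinuousOn (lagrangeBracket p u u' v v') (Icc l r))
    (hle : lagrangeBracket p u u' v v' l ≤ lagrangeBracket p u u' v v' r) :
    EqOn Q₁ Q₂ (Ioo l r) := by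
  have hderiv : ∀ x ∈ Ioo l r,
      HasDerivAt (lagrangeBracket p u u' v v') ((Q₂ x - Q₁ x) * (u x * v x)) x := fun x hx ↦
    (hasDerivAt_lagrangeBracket (hu x hx) (hpu x hx) (hv x hx) (hpv x hx)).congr_deriv (by ring)
  have huv : ∀ x ∈ Ioo l r, 0 < u x * v x := fun x hx ↦ mul_pos (hupos x hx) (hvpos x hx)
  have hzero : EqOn (fun x ↦ (Q₂ x - Q₁ x) * (u x * v x)) 0 (Ioo l r) :=
    eqOn_zero_of_hasDerivAt_nonpos hW hderiv
      (fun x hx ↦ mul_nonpos_of_nonpos_of_nonneg (sub_nonpos.2 (hQ x hx)) (huv x hx).le) hle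
  intro x hx
  exact (sub_eq_zero.1 ((mul_eq_zero.1 (hzero hx)).resolve_right (huv x hx).ne')).symm

end SturmLiouville

/-- `θ`, with derivative `θ'`, is a principal eigenfunction with eigenvalue `μ` of the radial
Schrödinger operator `θ ↦ -(θ'' + (k / r) θ' + q θ)` on `[0, R]`, with Neumann condition at `0` and
Dirichlet condition at `R`. For a natural number `k`, this is the radial part of `-Δ - q` on the
ball of radius `R` in dimension `k + 1`. The derivative `θ'` is an argument, and `deriv θ` is not
used, because only one-sided derivatives are meaningful at `0` and `R`. -/
structure IsRadialPrincipalEigenfunction (k R : ℝ) (q : ℝ → ℝ) (μ : ℝ) (θ θ' : ℝ → ℝ) : Prop where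
  continuousOn : ContinuousOn θ (Icc 0 R)
  continuousOn_deriv : ContinuousOn θ' (Icc 0 R)
  hasDerivAt : ∀ r ∈ Ioo 0 R, HasDerivAt θ (θ' r) r
  hasDerivAt_deriv : ∀ r ∈ Ioo 0 R,
    HasDerivAt θ' (-(k / r * θ' r) - (q r + μ) * θ r) r
  pos : ∀ r ∈ Ioo 0 R, 0 < θ r
  neumann : θ' 0 = 0
  dirichlet : θ R = 0

namespace IsRadialPrincipalEigenfunction

variable {k R μ μa μb : ℝ} {q a b θ θ' θa θa' θb θb' : ℝ → ℝ}

theorem of_deriv (hθ : DifferentiableOn ℝ θ (Icc 0 R)) (hθ' : ContinuousOn (deriv θ) (Icc 0 R))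
    (hθ'' : DifferentiableOn ℝ (deriv θ) (Ioc 0 R)) (hpos : ∀ r ∈ Ico 0 R, 0 < θ r)
    (hode : ∀ r ∈ Ioc 0 R, deriv (deriv θ) r + k / r * deriv θ r + q r * θ r = -μ * θ r)
    (hneumann : deriv θ 0 = 0) (hdirichlet : θ R = 0) :
    IsRadialPrincipalEigenfunction k R q μ θ (deriv θ) where
  continuousOn := hθ.continuousOn
  continuousOn_deriv := hθ'
  hasDerivAt r hr := (hθ.differentiableAt (Icc_mem_nhds hr.1 hr.2)).hasDerivAt
  hasDerivAt_deriv r hr :=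
    (hθ''.differentiableAt (Ioc_mem_nhds hr.1 hr.2)).hasDerivAt.congr_deriv
      (by linarith [hode r (Ioo_subset_Ioc_self hr)])
  pos r hr := hpos r (Ioo_subset_Ico_self hr)
  neumann := hneumann
  dirichlet := hdirichlet

theorem hasDerivAt_rpow_mul_deriv (h : IsRadialPrincipalEigenfunction k R q μ θ θ') {r : ℝ}
    (hr : r ∈ Ioo 0 R) :
    HasDerivAt (fun s ↦ s ^ k * θ' s) (-(r ^ k * (q r + μ) * θ r)) r := by
  have hr0 : r ≠ 0 := hr.1.ne'
  refine ((Real.hasDerivAt_rpow_const (.inl hr0)).fun_mul (h.hasDerivAt_deriv r hr)).congr_deriv ?_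
  rw [Real.rpow_sub_one hr0]
  ring

theorem eqOn_add_eigenvalue (hk : 0 ≤ k)
    (hθa : IsRadialPrincipalEigenfunction k R a μa θa θa')
    (hθb : IsRadialPrincipalEigenfunction k R b μb θb θb')
    (hle : ∀ r ∈ Ioo 0 R, b r + μb ≤ a r + μa) :
    EqOn (fun r ↦ a r + μa) (fun r ↦ b r + μb) (Ioo 0 R) := by
  have hcont : ContinuousOn (lagrangeBracket (· ^ k) θa θa' θb θb') (Icc 0 R) :=
    continuousOn_lagrangeBracket (Real.continuous_rpow_const hk).continuousOn
      hθa.continuousOn hθa.continuousOn_deriv hθb.continuousOn hθb.continuousOn_deriv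
  have hzero : lagrangeBracket (· ^ k) θa θa' θb θb' 0 = 0 := by
    simp [lagrangeBracket, hθa.neumann, hθb.neumann]
  have hR : lagrangeBracket (· ^ k) θa θa' θb θb' R = 0 := by
    simp [lagrangeBracket, hθa.dirichlet, hθb.dirichlet]
  have hweighted : EqOn (fun r ↦ r ^ k * (a r + μa)) (fun r ↦ r ^ k * (b r + μb)) (Ioo 0 R) :=
    eqOn_potential_of_lagrangeBracket_le
      hθa.hasDerivAt (fun _ ↦ hθa.hasDerivAt_rpow_mul_deriv) hθa.pos
      hθb.hasDerivAt (fun _ ↦ hθb.hasDerivAt_rpow_mul_deriv) hθb.pos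
      (fun r hr ↦ mul_le_mul_of_nonneg_left (hle r hr) (Real.rpow_nonneg hr.1.le k))
      hcont (hzero.trans hR.symm).le
  intro r hr
  exact mul_left_cancel₀ (Real.rpow_pos_of_pos hr.1 k).ne' (hweighted hr)

end IsRadialPrincipalEigenfunction

theorem principal_eigenvalue_comparison_general {k R μa μb : ℝ} {a b θa θa' θb θb' : ℝ → ℝ}
    (hk : 0 ≤ k) (hR : 0 < R)
    (ha : ContinuousOn a (Icc 0 R)) (hb : ContinuousOn b (Icc 0 R))
    (hab : ∀ r ∈ Icc 0 R, b r ≤ a r) (hab' : ∃ r₀ ∈ Icc 0 R, b r₀ < a r₀)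
    (hθa : IsRadialPrincipalEigenfunction k R a μa θa θa')
    (hθb : IsRadialPrincipalEigenfunction k R b μb θb θb') :
    μa < μb := by
  by_contra! hμ
  have hle : ∀ r ∈ Ioo 0 R, b r + μb ≤ a r + μa := fun r hr ↦
    add_le_add (hab r (Ioo_subset_Icc_self hr)) hμ
  have hIoo : EqOn a b (Ioo 0 R) := fun r hr ↦ by
    linarith [hθa.eqOn_add_eigenvalue hk hθb hle hr, hab r (Ioo_subset_Icc_self hr)]
  have hIcc : EqOn a b (Icc 0 R) :=
    hIoo.of_subset_closure ha hb Ioo_subset_Icc_self (closure_Ioo hR.ne).ge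
  obtain ⟨r₀, hr₀, hlt⟩ := hab'
  exact hlt.ne' (hIcc hr₀)

/-- Monotonicity of the principal eigenvalue in the potential: if `a ≥ b` on `[0,1]`
with strict inequality somewhere in `[0,1)`, and `θ_a`, `θ_b` are principal (positive)
eigenfunctions of the radial Schrödinger operators with potentials `a` and `b` and
eigenvalues `μ_a` and `μ_b` respectively, then `μ_a < μ_b`. -/
theorem principal_eigenvalue_comparison (a b θa θb : ℝ → ℝ) (μa μb : ℝ)
    (ha : ContinuousOn a (Set.Icc 0 1))
    (hb : ContinuousOn b (Set.Icc 0 1))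
    (hab : ∀ r ∈ Set.Icc (0 : ℝ) 1, b r ≤ a r)
    (hab' : ∃ r₀ ∈ Set.Ico (0 : ℝ) 1, b r₀ < a r₀)
    (ha1 : DifferentiableOn ℝ θa (Set.Icc 0 1))
    (ha1' : ContinuousOn (deriv θa) (Set.Icc 0 1))
    (ha2 : DifferentiableOn ℝ (deriv θa) (Set.Ioc 0 1))
    (hapos : ∀ r ∈ Set.Ico (0 : ℝ) 1, 0 < θa r)
    (haode : ∀ r ∈ Set.Ioc (0 : ℝ) 1,
      deriv (deriv θa) r + (2 / r) * deriv θa r + a r * θa r = -μa * θa r)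
    (habc1 : θa 1 = 0) (habc0 : deriv θa 0 = 0)
    (hb1 : DifferentiableOn ℝ θb (Set.Icc 0 1))
    (hb1' : ContinuousOn (deriv θb) (Set.Icc 0 1))
    (hb2 : DifferentiableOn ℝ (deriv θb) (Set.Ioc 0 1))
    (hbpos : ∀ r ∈ Set.Ico (0 : ℝ) 1, 0 < θb r)
    (hbode : ∀ r ∈ Set.Ioc (0 : ℝ) 1,
      deriv (deriv θb) r + (2 / r) * deriv θb r + b r * θb r = -μb * θb r)
    (hbbc1 : θb 1 = 0) (hbbc0 : deriv θb 0 = 0) :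
    μa < μb := by
  exact principal_eigenvalue_comparison_general zero_le_two one_pos ha hb hab
    (hab'.imp fun _ h ↦ h.imp_left fun hr₀ ↦ Set.Ico_subset_Icc_self hr₀)
    (.of_deriv ha1 ha1' ha2 hapos haode habc0 habc1)
    (.of_deriv hb1 hb1' hb2 hbpos hbode hbbc0 hbbc1)
end

section
/- Let a : [0,1] → ℝ be continuous, μ ∈ ℝ, and suppose θ : [0,1] → ℝ is continuously differentiable on [0,1], twice differentiable on (0,1], positive on [0,1), and satisfies θ'' + (2/r)θ' + a(r)θ = −μθ on (0,1] with θ(1) = 0 and θ'(0) = 0. Then for every continuously differentiable η : [0,1] → ℝ with η(1) = 0, one has ∫₀¹ (η'(r)² − a(r)·η(r)²)·r² dr ≥ μ·∫₀¹ η(r)²·r² dr. -/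
/-!
Jacobi's argument: if `u > 0` and `(p u')' + k u ≤ 0`, then completing the square gives Picone's
inequality `(η² p u' / u)' ≤ p η'² - k η²`, which is integrated. Here `(p θ')' + q θ ≤ 0` with
`p = r²` and `q = (μ + a) r²`, but `θ` may vanish at the outer endpoint, where `η² p θ' / θ` is
hard to control, so one takes `u = θ + ε` instead: it is a positive supersolution for the potential
`k = q θ / (θ + ε)`. The boundary terms drop out, at the outer endpoint because `η` vanishes there
and at the origin because `p` does, and dominated convergence restores `q` as `ε → 0`.
-/

open Set Filter Topology MeasureTheory

/-- `u`, with derivative `u'`, is a supersolution of the Sturm–Liouville equation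
`(p u')' + k u = 0` on `[a, b]`. Continuity up to the endpoints is asked of the flux `p u'` and not
of `u'`, so that `p` may degenerate there. -/
structure IsSupersolution (p k u u' : ℝ → ℝ) (a b : ℝ) : Prop where
  continuousOn : ContinuousOn u (Icc a b)
  hasDerivAt : ∀ r ∈ Ioo a b, HasDerivAt u (u' r) r
  continuousOn_flux : ContinuousOn (fun r ↦ p r * u' r) (Icc a b)
  differentiableOn_flux : DifferentiableOn ℝ (fun r ↦ p r * u' r) (Ioo a b)
  deriv_flux_le : ∀ r ∈ Ioo a b, deriv (fun x ↦ p x * u' x) r ≤ -(k r * u r)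

/-- `η`, with derivative `η'`, has finite Dirichlet energy `∫ p η'²` on `[a, b]`: the class of
test functions for the quadratic form of a Sturm–Liouville operator. -/
structure HasFiniteEnergy (p η η' : ℝ → ℝ) (a b : ℝ) : Prop where
  continuousOn : ContinuousOn η (Icc a b)
  hasDerivAt : ∀ r ∈ Ioo a b, HasDerivAt η (η' r) r
  intervalIntegrable : IntervalIntegrable (fun r ↦ p r * η' r ^ 2) volume a b

section Picone

variable {p k u u' η η' : ℝ → ℝ} {a b : ℝ}

theorem hasDerivAt_sq_mul_flux_div {r flux' v : ℝ} (hu : HasDerivAt u (u' r) r)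
    (hflux : HasDerivAt (fun x ↦ p x * u' x) flux' r) (hη : HasDerivAt η v r) (hur : u r ≠ 0) :
    HasDerivAt (fun x ↦ η x ^ 2 * (p x * u' x) / u x)
      (p r * v ^ 2 + flux' / u r * η r ^ 2 - p r * (v - η r * u' r / u r) ^ 2) r := by
  refine (((hη.pow 2).mul hflux).div hu hur).congr_deriv ?_
  simp only [Pi.pow_apply, Pi.mul_apply]
  field_simp
  ring

theorem IsSupersolution.sub_le_integral_sub_integral (hu : IsSupersolution p k u u' a b)
    (hu_pos : ∀ r ∈ Icc a b, 0 < u r) (hab : a ≤ b) (hp : ∀ r ∈ Ioo a b, 0 ≤ p r)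
    (hη : HasFiniteEnergy p η η' a b)
    (hkη : IntervalIntegrable (fun r ↦ k r * η r ^ 2) volume a b) :
    η b ^ 2 * (p b * u' b) / u b - η a ^ 2 * (p a * u' a) / u a ≤
      (∫ r in a..b, p r * η' r ^ 2) - ∫ r in a..b, k r * η r ^ 2 := by
  have hu_pos' : ∀ r ∈ Ioo a b, 0 < u r := fun r hr ↦ hu_pos r (Ioo_subset_Icc_self hr)
  rw [← intervalIntegral.integral_sub hη.intervalIntegrable hkη]
  refine intervalIntegral.sub_le_integral_of_hasDeriv_right_of_le hab
    (((hη.continuousOn.pow 2).mul hu.continuousOn_flux).div hu.continuousOn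
      fun r hr ↦ (hu_pos r hr).ne')
    (fun r hr ↦ (hasDerivAt_sq_mul_flux_div (hu.hasDerivAt r hr)
      (hu.differentiableOn_flux.hasDerivAt (Ioo_mem_nhds hr.1 hr.2))
      (hη.hasDerivAt r hr) (hu_pos' r hr).ne').hasDerivWithinAt)
    ((intervalIntegrable_iff_integrableOn_Icc_of_le hab).1 (hη.intervalIntegrable.sub hkη))
    fun r hr ↦ ?_
  have hquot : deriv (fun x ↦ p x * u' x) r / u r ≤ -k r := by
    rw [div_le_iff₀ (hu_pos' r hr), neg_mul]
    exact hu.deriv_flux_le r hr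
  have hpot := mul_le_mul_of_nonneg_right hquot (sq_nonneg (η r))
  have hsquare := mul_nonneg (hp r hr) (sq_nonneg (η' r - η r * u' r / u r))
  linarith

end Picone

theorem tendsto_integral_mul_div_add_const {α : Type*} [MeasurableSpace α] {ν : Measure α}
    {f g : α → ℝ} (hf : Integrable f ν) (hg : AEMeasurable g ν) (hpos : ∀ᵐ x ∂ν, 0 < g x) :
    Tendsto (fun ε : ℝ ↦ ∫ x, f x * (g x / (g x + ε)) ∂ν) (𝓝[>] 0) (𝓝 (∫ x, f x ∂ν)) := by
  refine tendsto_integral_filter_of_dominated_convergence (fun x ↦ ‖f x‖)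
    (.of_forall fun ε ↦ hf.aestronglyMeasurable.mul
      (hg.div (hg.add_const ε)).aestronglyMeasurable) ?_ hf.norm ?_
  · filter_upwards [self_mem_nhdsWithin] with ε (hε : 0 < ε)
    filter_upwards [hpos] with x hx
    have hratio : ‖g x / (g x + ε)‖ ≤ 1 := by
      rw [Real.norm_of_nonneg (by positivity)]
      exact div_le_one_of_le₀ (by linarith) (by positivity)
    rw [norm_mul]
    exact mul_le_of_le_one_right (norm_nonneg _) hratio
  · filter_upwards [hpos] with x hx
    have hlim : Tendsto (fun ε : ℝ ↦ f x * (g x / (g x + ε))) (𝓝 0)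
        (𝓝 (f x * (g x / (g x + 0)))) :=
      ((tendsto_const_nhds.div (tendsto_const_nhds.add tendsto_id)
        (by simpa using hx.ne')).const_mul _)
    rw [add_zero, div_self hx.ne', mul_one] at hlim
    exact hlim.mono_left nhdsWithin_le_nhds

section SturmLiouville

variable {p q θ θ' η η' : ℝ → ℝ} {a b ε : ℝ}

theorem IsSupersolution.add_const (hθ : IsSupersolution p q θ θ' a b)
    (hθε : ∀ r ∈ Ioo a b, θ r + ε ≠ 0) :
    IsSupersolution p (fun r ↦ q r * (θ r / (θ r + ε))) (fun r ↦ θ r + ε) θ' a b where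
  continuousOn := hθ.continuousOn.add continuousOn_const
  hasDerivAt r hr := (hθ.hasDerivAt r hr).add_const ε
  continuousOn_flux := hθ.continuousOn_flux
  differentiableOn_flux := hθ.differentiableOn_flux
  deriv_flux_le r hr := by
    rw [mul_assoc, div_mul_cancel₀ _ (hθε r hr)]
    exact hθ.deriv_flux_le r hr

theorem IsSupersolution.integral_mul_div_add_const_le (hθ : IsSupersolution p q θ θ' a b)
    (hθ_nonneg : ∀ r ∈ Icc a b, 0 ≤ θ r) (hab : a ≤ b) (hp : ∀ r ∈ Ioo a b, 0 ≤ p r)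
    (hflux_left : p a * θ' a ≤ 0) (hη : HasFiniteEnergy p η η' a b)
    (hqη : IntervalIntegrable (fun r ↦ q r * η r ^ 2) volume a b) (hη_right : η b = 0)
    (hε : 0 < ε) :
    ∫ r in a..b, q r * η r ^ 2 * (θ r / (θ r + ε)) ≤ ∫ r in a..b, p r * η' r ^ 2 := by
  have hpos : ∀ r ∈ Icc a b, 0 < θ r + ε :=
    fun r hr ↦ add_pos_of_nonneg_of_pos (hθ_nonneg r hr) hε
  have hθε := hθ.add_const fun r hr ↦ (hpos r (Ioo_subset_Icc_self hr)).ne'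
  have hratio : ContinuousOn (fun r ↦ θ r / (θ r + ε)) (uIcc a b) := by
    rw [uIcc_of_le hab]
    exact hθ.continuousOn.div hθε.continuousOn fun r hr ↦ (hpos r hr).ne'
  have hcomm : ∀ r, q r * (θ r / (θ r + ε)) * η r ^ 2 = q r * η r ^ 2 * (θ r / (θ r + ε)) :=
    fun r ↦ mul_right_comm _ _ _
  have hpicone := hθε.sub_le_integral_sub_integral hpos hab hp hη
    (by simpa only [hcomm] using hqη.mul_continuousOn hratio)
  have hleft : η a ^ 2 * (p a * θ' a) / (θ a + ε) ≤ 0 :=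
    div_nonpos_of_nonpos_of_nonneg (mul_nonpos_of_nonneg_of_nonpos (sq_nonneg _) hflux_left)
      (hpos a (left_mem_Icc.2 hab)).le
  simp only [hη_right, hcomm, zero_pow two_ne_zero, zero_mul, zero_div] at hpicone
  linarith

theorem IsSupersolution.integral_mul_sq_le (hθ : IsSupersolution p q θ θ' a b)
    (hθ_pos : ∀ r ∈ Ioo a b, 0 < θ r) (hab : a < b) (hp : ∀ r ∈ Ioo a b, 0 ≤ p r)
    (hflux_left : p a * θ' a ≤ 0) (hη : HasFiniteEnergy p η η' a b)
    (hqη : IntervalIntegrable (fun r ↦ q r * η r ^ 2) volume a b) (hη_right : η b = 0) :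
    ∫ r in a..b, q r * η r ^ 2 ≤ ∫ r in a..b, p r * η' r ^ 2 := by
  have hθ_nonneg : ∀ r ∈ Icc a b, 0 ≤ θ r := by
    have hθ_cont := hθ.continuousOn
    rw [← closure_Ioo hab.ne] at hθ_cont ⊢
    exact le_on_closure (fun r hr ↦ (hθ_pos r hr).le) continuousOn_const hθ_cont
  have hlim : Tendsto (fun ε : ℝ ↦ ∫ r in a..b, q r * η r ^ 2 * (θ r / (θ r + ε)))
      (𝓝[>] 0) (𝓝 (∫ r in a..b, q r * η r ^ 2)) := by
    simp only [intervalIntegral.integral_of_le hab.le, integral_Ioc_eq_integral_Ioo]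
    exact tendsto_integral_mul_div_add_const
      ((intervalIntegrable_iff_integrableOn_Ioo_of_le hab.le).1 hqη)
      ((hθ.continuousOn.mono Ioo_subset_Icc_self).aemeasurable measurableSet_Ioo)
      (ae_restrict_of_forall_mem measurableSet_Ioo hθ_pos)
  refine le_of_tendsto hlim ?_
  filter_upwards [self_mem_nhdsWithin] with ε hε
  exact hθ.integral_mul_div_add_const_le hθ_nonneg hab.le hp hflux_left hη hqη hη_right hε

end SturmLiouville

theorem hasDerivAt_pow_mul {f : ℝ → ℝ} {f' r : ℝ} (m : ℕ) (hr : r ≠ 0) (hf : HasDerivAt f f' r) :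
    HasDerivAt (fun x ↦ x ^ m * f x) (r ^ m * (f' + m / r * f r)) r := by
  refine ((hasDerivAt_pow m r).mul hf).congr_deriv ?_
  rcases m with _ | m
  · simp
  · rw [Nat.add_sub_cancel]
    field_simp
    ring

theorem isSupersolution_pow_of_radial {m : ℕ} {R μ : ℝ} {a θ θ' : ℝ → ℝ}
    (hθ : ContinuousOn θ (Icc 0 R)) (hθ' : ∀ r ∈ Ioo 0 R, HasDerivAt θ (θ' r) r)
    (hθ'_cont : ContinuousOn θ' (Icc 0 R)) (hθ'_diff : DifferentiableOn ℝ θ' (Ioo 0 R))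
    (hsuper : ∀ r ∈ Ioo 0 R, deriv θ' r + (m / r) * θ' r + a r * θ r ≤ -μ * θ r) :
    IsSupersolution (fun r ↦ r ^ m) (fun r ↦ (μ + a r) * r ^ m) θ θ' 0 R := by
  have hflux : ∀ r ∈ Ioo 0 R,
      HasDerivAt (fun x ↦ x ^ m * θ' x) (r ^ m * (deriv θ' r + m / r * θ' r)) r :=
    fun r hr ↦ hasDerivAt_pow_mul m hr.1.ne' (hθ'_diff.hasDerivAt (Ioo_mem_nhds hr.1 hr.2))
  refine ⟨hθ, hθ', (continuous_pow m).continuousOn.mul hθ'_cont,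
    fun r hr ↦ (hflux r hr).differentiableAt.differentiableWithinAt, fun r hr ↦ ?_⟩
  rw [(hflux r hr).deriv]
  linarith [mul_le_mul_of_nonneg_left (hsuper r hr) (pow_nonneg hr.1.le m)]

/-- The space dimension is `m + 1`. -/
theorem rayleigh_quotient_lower_bound_general {m : ℕ} (hm : m ≠ 0) {R : ℝ} (hR : 0 < R)
    {a θ θ' η η' : ℝ → ℝ} {μ : ℝ}
    (ha : IntervalIntegrable (fun r ↦ a r * r ^ m) volume 0 R)
    (hθ : ContinuousOn θ (Icc 0 R)) (hθ_pos : ∀ r ∈ Ioo 0 R, 0 < θ r)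
    (hθ' : ∀ r ∈ Ioo 0 R, HasDerivAt θ (θ' r) r)
    (hθ'_cont : ContinuousOn θ' (Icc 0 R)) (hθ'_diff : DifferentiableOn ℝ θ' (Ioo 0 R))
    (hsuper : ∀ r ∈ Ioo 0 R, deriv θ' r + (m / r) * θ' r + a r * θ r ≤ -μ * θ r)
    (hη : ContinuousOn η (Icc 0 R)) (hη' : ∀ r ∈ Ioo 0 R, HasDerivAt η (η' r) r)
    (henergy : IntervalIntegrable (fun r ↦ η' r ^ 2 * r ^ m) volume 0 R) (hη_right : η R = 0) :
    μ * ∫ r in (0 : ℝ)..R, η r ^ 2 * r ^ m ≤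
      ∫ r in (0 : ℝ)..R, (η' r ^ 2 - a r * η r ^ 2) * r ^ m := by
  have hη_sq : ContinuousOn (fun r ↦ η r ^ 2) (uIcc 0 R) := by
    rw [uIcc_of_le hR.le]
    exact hη.pow 2
  have hmass : IntervalIntegrable (fun r ↦ μ * (η r ^ 2 * r ^ m)) volume 0 R :=
    (continuousOn_const.mul (hη_sq.mul (continuous_pow m).continuousOn)).intervalIntegrable
  have hpot : IntervalIntegrable (fun r ↦ a r * r ^ m * η r ^ 2) volume 0 R :=
    ha.mul_continuousOn hη_sq
  have hθ_super := isSupersolution_pow_of_radial hθ hθ' hθ'_cont hθ'_diff hsuper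
  have hjacobi := hθ_super.integral_mul_sq_le hθ_pos hR (fun r hr ↦ pow_nonneg hr.1.le m)
    (by simp [hm]) ⟨hη, hη', by simpa only [mul_comm] using henergy⟩
    ((hmass.add hpot).congr fun r _ ↦ by ring) hη_right
  calc μ * ∫ r in (0 : ℝ)..R, η r ^ 2 * r ^ m
      = (∫ r in (0 : ℝ)..R, (μ + a r) * r ^ m * η r ^ 2) -
          ∫ r in (0 : ℝ)..R, a r * r ^ m * η r ^ 2 := by
        rw [← intervalIntegral.integral_const_mul, eq_sub_iff_add_eq,
          ← intervalIntegral.integral_add hmass hpot]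
        congr 1 with r
        ring
    _ ≤ (∫ r in (0 : ℝ)..R, r ^ m * η' r ^ 2) - ∫ r in (0 : ℝ)..R, a r * r ^ m * η r ^ 2 :=
        sub_le_sub_right hjacobi _
    _ = ∫ r in (0 : ℝ)..R, (η' r ^ 2 - a r * η r ^ 2) * r ^ m := by
        simp only [mul_comm (_ ^ m) (η' _ ^ 2)]
        rw [← intervalIntegral.integral_sub henergy hpot]
        congr 1 with r
        ring

/-- Rayleigh-quotient lower bound by the principal eigenvalue: if `θ` is a positive
(principal) eigenfunction with eigenvalue `μ` of the radial Schrödinger operator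
`θ ↦ −(θ'' + (2/r)θ' + aθ)` with `θ(1) = 0`, `θ'(0) = 0`, then every continuously
differentiable `η` with `η(1) = 0` satisfies
`∫₀¹ (η'² − a η²) r² dr ≥ μ ∫₀¹ η² r² dr`. -/
theorem rayleigh_quotient_lower_bound (a θ : ℝ → ℝ) (μ : ℝ)
    (ha : ContinuousOn a (Set.Icc 0 1))
    (hθ1 : DifferentiableOn ℝ θ (Set.Icc 0 1))
    (hθ1' : ContinuousOn (deriv θ) (Set.Icc 0 1))
    (hθ2 : DifferentiableOn ℝ (deriv θ) (Set.Ioc 0 1))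
    (hθpos : ∀ r ∈ Set.Ico (0 : ℝ) 1, 0 < θ r)
    (hθode : ∀ r ∈ Set.Ioc (0 : ℝ) 1,
      deriv (deriv θ) r + (2 / r) * deriv θ r + a r * θ r = -μ * θ r)
    (hθbc1 : θ 1 = 0) (hθbc0 : deriv θ 0 = 0)
    (η η' : ℝ → ℝ)
    (hη : ∀ r ∈ Set.Icc (0 : ℝ) 1, HasDerivAt η (η' r) r)
    (hη' : ContinuousOn η' (Set.Icc 0 1))
    (hηbc : η 1 = 0) :
    μ * ∫ r in (0 : ℝ)..1, η r ^ 2 * r ^ 2 ≤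
      ∫ r in (0 : ℝ)..1, (η' r ^ 2 - a r * η r ^ 2) * r ^ 2 := by
  have hη_cont : ContinuousOn η (Icc 0 1) := HasDerivAt.continuousOn hη
  exact_mod_cast rayleigh_quotient_lower_bound_general two_ne_zero one_pos
    (ContinuousOn.intervalIntegrable_of_Icc zero_le_one (by fun_prop)) hθ1.continuousOn
    (fun r hr ↦ hθpos r (Ioo_subset_Ico_self hr))
    (fun r hr ↦ hθ1.hasDerivAt (Icc_mem_nhds hr.1 hr.2)) hθ1' (hθ2.mono Ioo_subset_Ioc_self)
    (fun r hr ↦ (hθode r (Ioo_subset_Ioc_self hr)).le) hη_cont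
    (fun r hr ↦ hη r (Ioo_subset_Icc_self hr))
    (ContinuousOn.intervalIntegrable_of_Icc zero_le_one (by fun_prop)) hηbc
end

section
/- For every continuously differentiable function η : [0,1] → ℝ with η(1) = 0, one has ∫₀¹ (η'(r)² − (15/(1+r²)²)·η(r)²)·r² dr ≥ 0. I.e., the principal eigenvalue of the linearization of the radial Lichnerowicz–York equation at the critical solution α = 1 is zero. -/
/-!
The function `θ₁(r) = (1 - r²) (1 + r²) ^ (-3/2)` solves `(r² θ₁')' = -(15 r² / (1 + r²)²) θ₁` and
is positive on `[0, 1)`. Up to a constant it is the derivative at `t = 1` of the rescalings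
`t ^ (1/2) φ_c(t r)` of the critical solution, which all solve the same nonlinear equation. Since
`θ₁` has no interior zero, Picone's identity
`p η'² - q η² = (p θ'/θ · η²)' + p (η' - θ'/θ · η)²` for solutions of `(p θ')' = -q θ` bounds the
energy of `η` from below by the increment of `p θ'/θ · η²`. This increment is zero: the boundary
term vanishes at `r = 0` because the weight `p = r²` does, and at `r = 1` because `η²` vanishes to
higher order than `θ₁`, whose zero is simple.
-/

open Set Filter Topology MeasureTheory

section SimpleZero

variable {𝕜 : Type*} [NontriviallyNormedField 𝕜] {f g : 𝕜 → 𝕜} {f' g' x : 𝕜} {s : Set 𝕜}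

theorem tendsto_div_of_hasDerivWithinAt (hf : HasDerivWithinAt f f' s x)
    (hg : HasDerivWithinAt g g' s x) (hg' : g' ≠ 0) (hfx : f x = 0) (hgx : g x = 0) :
    Tendsto (fun y ↦ f y / g y) (𝓝[s \ {x}] x) (𝓝 (f' / g')) := by
  rw [hasDerivWithinAt_iff_tendsto_slope] at hf hg
  refine (hf.div hg hg').congr' ?_
  filter_upwards [self_mem_nhdsWithin] with y hy
  have hyx : y - x ≠ 0 := sub_ne_zero.2 hy.2
  simp only [Pi.div_apply, slope_def_field, hfx, hgx, sub_zero, div_div_div_cancel_right₀ hyx]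

theorem continuousWithinAt_sq_div_of_simple_zero (hf : HasDerivWithinAt f f' s x)
    (hg : HasDerivWithinAt g g' s x) (hg' : g' ≠ 0) (hfx : f x = 0) (hgx : g x = 0) :
    ContinuousWithinAt (fun y ↦ f y ^ 2 / g y) s x := by
  have hf₀ : Tendsto f (𝓝[s \ {x}] x) (𝓝 0) :=
    hfx ▸ hf.continuousWithinAt.mono sdiff_subset
  have hlim := hf₀.mul (tendsto_div_of_hasDerivWithinAt hf hg hg' hfx hgx)
  rw [← continuousWithinAt_sdiff_self]
  simpa only [ContinuousWithinAt, hfx, zero_pow two_ne_zero, zero_div, zero_mul, ← mul_div_assoc,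
    ← sq] using hlim

end SimpleZero

section Picone

variable {a b : ℝ} {p q θ θ' η η' : ℝ → ℝ} {s : Set ℝ} {r : ℝ}

/-- The boundary term `p θ' / θ · η²` of Picone's identity, where `θ'` stands for the derivative
of `θ`. At a zero of `θ` division by zero makes it vanish, which is its limit there when the zero is
simple and shared by `η`. -/
noncomputable def piconeFlux (p θ θ' η : ℝ → ℝ) (r : ℝ) : ℝ :=
  p r * θ' r * (η r ^ 2 / θ r)

theorem hasDerivWithinAt_piconeFlux (hθ : HasDerivWithinAt θ (θ' r) s r)
    (hpθ' : HasDerivWithinAt (fun x ↦ p x * θ' x) (-(q r * θ r)) s r)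
    (hη : HasDerivWithinAt η (η' r) s r) (hr : θ r ≠ 0) :
    HasDerivWithinAt (piconeFlux p θ θ' η)
      (p r * η' r ^ 2 - q r * η r ^ 2 - p r * (η' r - θ' r / θ r * η r) ^ 2) s r := by
  refine (hpθ'.mul ((hη.pow 2).div hθ hr)).congr_deriv ?_
  simp only [Pi.pow_apply, Pi.div_apply]
  field_simp
  ring

theorem continuousWithinAt_piconeFlux (hθ : HasDerivWithinAt θ (θ' r) s r)
    (hpθ' : ContinuousWithinAt (fun x ↦ p x * θ' x) s r)
    (hη : HasDerivWithinAt η (η' r) s r) (hzero : θ r = 0 → θ' r ≠ 0 ∧ η r = 0) :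
    ContinuousWithinAt (piconeFlux p θ θ' η) s r := by
  refine hpθ'.mul ?_
  by_cases hr : θ r = 0
  · obtain ⟨hθ', hηr⟩ := hzero hr
    exact continuousWithinAt_sq_div_of_simple_zero hη hθ hθ' hηr hr
  · exact (hη.continuousWithinAt.pow 2).div hθ.continuousWithinAt hr

theorem piconeFlux_sub_le_integral (hab : a ≤ b) (hp : ∀ r ∈ Ioo a b, 0 ≤ p r)
    (hθ : ∀ r ∈ Icc a b, HasDerivWithinAt θ (θ' r) (Icc a b) r)
    (hpθ' : ∀ r ∈ Icc a b,
      HasDerivWithinAt (fun x ↦ p x * θ' x) (-(q r * θ r)) (Icc a b) r)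
    (hη : ∀ r ∈ Icc a b, HasDerivWithinAt η (η' r) (Icc a b) r)
    (hθ_ne : ∀ r ∈ Ioo a b, θ r ≠ 0)
    (hzero : ∀ r ∈ Icc a b, θ r = 0 → θ' r ≠ 0 ∧ η r = 0)
    (hint : IntervalIntegrable (fun r ↦ p r * η' r ^ 2 - q r * η r ^ 2) volume a b) :
    piconeFlux p θ θ' η b - piconeFlux p θ θ' η a ≤
      ∫ r in a..b, (p r * η' r ^ 2 - q r * η r ^ 2) := by
  refine intervalIntegral.sub_le_integral_of_hasDeriv_right_of_le hab
    (g' := fun r ↦ p r * η' r ^ 2 - q r * η r ^ 2 - p r * (η' r - θ' r / θ r * η r) ^ 2)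
    (fun r hr ↦ continuousWithinAt_piconeFlux (hθ r hr) (hpθ' r hr).continuousWithinAt
      (hη r hr) (hzero r hr))
    (fun r hr ↦ ?_) ((intervalIntegrable_iff_integrableOn_Icc_of_le hab).1 hint)
    (fun r hr ↦ sub_le_self _ (mul_nonneg (hp r hr) (sq_nonneg _)))
  have hr' := Ioo_subset_Icc_self hr
  exact ((hasDerivWithinAt_piconeFlux (hθ r hr') (hpθ' r hr') (hη r hr')
    (hθ_ne r hr)).hasDerivAt (Icc_mem_nhds hr.1 hr.2)).hasDerivWithinAt

end Picone

section GroundState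

variable {r : ℝ}

theorem hasDerivAt_mul_one_add_sq_rpow {f : ℝ → ℝ} {f' : ℝ} (hf : HasDerivAt f f' r) (s : ℝ) :
    HasDerivAt (fun x ↦ f x * (1 + x ^ 2) ^ s)
      ((f' * (1 + r ^ 2) + 2 * s * r * f r) * (1 + r ^ 2) ^ (s - 1)) r := by
  have hne : 1 + r ^ 2 ≠ 0 := by positivity
  have hbase : HasDerivAt (fun x : ℝ ↦ 1 + x ^ 2) (2 * r) r := by
    simpa using (hasDerivAt_pow 2 r).const_add 1
  refine (hf.mul (hbase.rpow_const (p := s) (Or.inl hne))).congr_deriv ?_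
  rw [Real.rpow_sub_one hne]
  field_simp

/-- The zero-eigenvalue eigenfunction `θ₁(r) = (1 - r²) / (1 + r²) ^ (3/2)` of the linearization at
the critical solution. -/
noncomputable def criticalGroundState (r : ℝ) : ℝ :=
  (1 - r ^ 2) * (1 + r ^ 2) ^ (-3 / 2 : ℝ)

/-- The derivative of `criticalGroundState` in closed form. -/
noncomputable def criticalGroundStateDeriv (r : ℝ) : ℝ :=
  (r ^ 3 - 5 * r) * (1 + r ^ 2) ^ (-5 / 2 : ℝ)

theorem hasDerivAt_criticalGroundState (r : ℝ) :
    HasDerivAt criticalGroundState (criticalGroundStateDeriv r) r := by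
  have hf : HasDerivAt (fun x : ℝ ↦ 1 - x ^ 2) (-(2 * r)) r := by
    simpa using (hasDerivAt_pow 2 r).const_sub 1
  refine (hasDerivAt_mul_one_add_sq_rpow hf (-3 / 2)).congr_deriv ?_
  rw [criticalGroundStateDeriv, show (-3 / 2 - 1 : ℝ) = -5 / 2 by norm_num]
  ring

theorem hasDerivAt_sq_mul_criticalGroundStateDeriv (r : ℝ) :
    HasDerivAt (fun x ↦ x ^ 2 * criticalGroundStateDeriv x)
      (-(15 * r ^ 2 / (1 + r ^ 2) ^ 2 * criticalGroundState r)) r := by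
  have hf : HasDerivAt (fun x : ℝ ↦ x ^ 5 - 5 * x ^ 3) (5 * r ^ 4 - 5 * (3 * r ^ 2)) r := by
    simpa using (hasDerivAt_pow 5 r).fun_sub ((hasDerivAt_pow 3 r).const_mul 5)
  have hflux : (fun x ↦ x ^ 2 * criticalGroundStateDeriv x) =
      fun x ↦ (x ^ 5 - 5 * x ^ 3) * (1 + x ^ 2) ^ (-5 / 2 : ℝ) := by
    funext x
    rw [criticalGroundStateDeriv]
    ring
  have hpow : (1 + r ^ 2) ^ (-5 / 2 - 1 : ℝ) = (1 + r ^ 2) ^ (-3 / 2 : ℝ) / (1 + r ^ 2) ^ 2 := by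
    rw [← Real.rpow_sub_natCast (by positivity)]
    norm_num
  rw [hflux]
  refine (hasDerivAt_mul_one_add_sq_rpow hf (-5 / 2)).congr_deriv ?_
  rw [hpow, criticalGroundState]
  ring

theorem criticalGroundState_eq_zero_iff : criticalGroundState r = 0 ↔ r ^ 2 = 1 := by
  have hpow : (1 + r ^ 2) ^ (-3 / 2 : ℝ) ≠ 0 := by positivity
  rw [criticalGroundState, mul_eq_zero_iff_right hpow, sub_eq_zero, eq_comm]

theorem criticalGroundStateDeriv_one_neg : criticalGroundStateDeriv 1 < 0 :=
  mul_neg_of_neg_of_pos (by norm_num) (by positivity)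

end GroundState

theorem critical_rayleigh_nonneg_general (η η' : ℝ → ℝ)
    (hη : ∀ r ∈ Icc (0 : ℝ) 1, HasDerivWithinAt η (η' r) (Icc 0 1) r)
    (henergy : IntervalIntegrable (fun r ↦ r ^ 2 * η' r ^ 2) volume 0 1)
    (hηbc : η 1 = 0) :
    0 ≤ ∫ r in (0 : ℝ)..1, (η' r ^ 2 - (15 / (1 + r ^ 2) ^ 2) * η r ^ 2) * r ^ 2 := by
  have hpot : ContinuousOn (fun r ↦ 15 * r ^ 2 / (1 + r ^ 2) ^ 2 * η r ^ 2) (Icc 0 1) :=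
    ((by fun_prop : ContinuousOn (fun r : ℝ ↦ 15 * r ^ 2) _).div (by fun_prop)
      fun r _ ↦ by positivity).mul ((HasDerivWithinAt.continuousOn hη).pow 2)
  have hzero : ∀ r ∈ Icc (0 : ℝ) 1, criticalGroundState r = 0 → r = 1 := fun r hr h ↦
    (pow_eq_one_iff_of_nonneg hr.1 two_ne_zero).1 (criticalGroundState_eq_zero_iff.1 h)
  have hpicone := piconeFlux_sub_le_integral (p := fun r ↦ r ^ 2) zero_le_one
    (fun r _ ↦ sq_nonneg r)
    (fun r _ ↦ (hasDerivAt_criticalGroundState r).hasDerivWithinAt)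
    (fun r _ ↦ (hasDerivAt_sq_mul_criticalGroundStateDeriv r).hasDerivWithinAt) hη
    (fun r hr h ↦ hr.2.ne (hzero r (Ioo_subset_Icc_self hr) h))
    (fun r hr h ↦ hzero r hr h ▸ ⟨criticalGroundStateDeriv_one_neg.ne, hηbc⟩)
    (henergy.sub (hpot.intervalIntegrable_of_Icc zero_le_one))
  calc
    0 = piconeFlux (fun r ↦ r ^ 2) criticalGroundState criticalGroundStateDeriv η 1 -
        piconeFlux (fun r ↦ r ^ 2) criticalGroundState criticalGroundStateDeriv η 0 := by
      simp [piconeFlux, hηbc]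
    _ ≤ ∫ r in (0 : ℝ)..1, (r ^ 2 * η' r ^ 2 - 15 * r ^ 2 / (1 + r ^ 2) ^ 2 * η r ^ 2) := hpicone
    _ = _ := intervalIntegral.integral_congr fun r _ ↦ by ring

/-- The Rayleigh quotient of the linearization of the radial Lichnerowicz–York
equation at the critical solution `α = 1` (potential `15/(1+r²)²`) is nonnegative:
for every continuously differentiable `η` with `η(1) = 0`,
`∫₀¹ (η'² − (15/(1+r²)²) η²) r² dr ≥ 0`.  I.e. the principal eigenvalue of the
linearization at the critical solution is zero. -/
theorem critical_rayleigh_nonneg (η η' : ℝ → ℝ)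
    (hη : ∀ r ∈ Set.Icc (0 : ℝ) 1, HasDerivAt η (η' r) r)
    (hη' : ContinuousOn η' (Set.Icc 0 1))
    (hηbc : η 1 = 0) :
    0 ≤ ∫ r in (0 : ℝ)..1, (η' r ^ 2 - (15 / (1 + r ^ 2) ^ 2) * η r ^ 2) * r ^ 2 :=
  critical_rayleigh_nonneg_general η η' (fun r hr ↦ (hη r hr).hasDerivWithinAt)
    (((continuousOn_id.pow 2).mul (hη'.pow 2)).intervalIntegrable_of_Icc zero_le_one) hηbc
end

section
/- For every α > 1 and every continuously differentiable η : [0,1] → ℝ with η(1) = 0 and η not identically zero, one has ∫₀¹ (η'(r)² − 15·(α/(α²+r²))²·η(r)²)·r² dr > 0. That is, the lower branch of solutions of the radial Lichnerowicz–York equation is stable: the principal eigenvalue of its linearization is strictly positive. -/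
/-!
The zero-energy equation `(r²u')' = -15(α/(α²+r²))² r² u` of the linearization has the explicit
solution `u = (α² - r²)/(α² + r²)^{3/2}`, positive on `[0, R]` as soon as `R < |α|`. By Picone's
identity the numerator of the Rayleigh quotient is, up to boundary terms, the integral of
`(r u (η/u)')²`. The boundary terms vanish since `r² u'` does at `0` and `η` does at `R`, so the
numerator could fail to be positive only if `η/u` were constant, hence zero.
-/

open Set MeasureTheory

section IntervalDerivative

variable {a b : ℝ}

theorem eq_of_hasDerivAt_of_ae_eq_zero {f f' : ℝ → ℝ} (hab : a ≤ b)
    (hf : ContinuousOn f (Icc a b)) (hf' : ∀ x ∈ Ioo a b, HasDerivAt f (f' x) x)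
    (hzero : ∀ᵐ x, x ∈ Ioo a b → f' x = 0) : f a = f b := by
  have hae : (fun _ ↦ 0) =ᵐ[volume.restrict (Ioo a b)] f' :=
    (ae_restrict_iff' measurableSet_Ioo).2 (hzero.mono fun _ hx hxm ↦ (hx hxm).symm)
  have hint : IntervalIntegrable f' volume a b :=
    (intervalIntegrable_iff_integrableOn_Ioo_of_le hab).2
      ((integrable_zero ℝ ℝ (volume.restrict (Ioo a b))).congr hae)
  have hsub : ∫ x in a..b, f' x = f b - f a :=
    intervalIntegral.integral_eq_sub_of_hasDerivAt_of_le hab hf hf' hint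
  have hint_zero : ∫ x in a..b, f' x = 0 := by
    rw [intervalIntegral.integral_of_le hab, integral_Ioc_eq_integral_Ioo,
      ← integral_congr_ae hae, integral_zero]
  linarith

theorem ae_eq_of_hasDerivAt_of_le_of_integral_le_sub {g g' φ : ℝ → ℝ}
    (hg : ContinuousOn g (Icc a b)) (hg' : ∀ x ∈ Ioo a b, HasDerivAt g (g' x) x)
    (hle : ∀ x ∈ Ioo a b, g' x ≤ φ x) (hφ : IntervalIntegrable φ volume a b)
    (hint : ∫ x in a..b, φ x ≤ g b - g a) : ∀ᵐ x, x ∈ Ioo a b → g' x = φ x := by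
  have sub_le {c d : ℝ} (hc : a ≤ c) (hcd : c ≤ d) (hd : d ≤ b) :
      g d - g c ≤ ∫ x in c..d, φ x := by
    have hIoo : Ioo c d ⊆ Ioo a b := Ioo_subset_Ioo hc hd
    refine intervalIntegral.sub_le_integral_of_hasDeriv_right_of_le hcd
      (hg.mono (Icc_subset_Icc hc hd)) (fun x hx ↦ (hg' x (hIoo hx)).hasDerivWithinAt) ?_
      fun x hx ↦ hle x (hIoo hx)
    exact ((intervalIntegrable_iff_integrableOn_Icc_of_le (hc.trans (hcd.trans hd))).1 hφ).mono_set
      (Icc_subset_Icc hc hd)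
  -- The inequalities on `[a, x]` and `[x, b]` add up to an equality, so both are equalities.
  have eq_primitive : ∀ x ∈ Icc a b, g x = g a + ∫ t in a..x, φ t := by
    intro x hx
    have hxu : x ∈ uIcc a b := Icc_subset_uIcc hx
    have hadd := intervalIntegral.integral_add_adjacent_intervals
      (hφ.mono_set (uIcc_subset_uIcc_left hxu)) (hφ.mono_set (uIcc_subset_uIcc_right hxu))
    linarith [sub_le le_rfl hx.1 hx.2, sub_le hx.1 hx.2 le_rfl]
  filter_upwards [hφ.ae_hasDerivAt_integral] with x hderiv hx
  have hprim : HasDerivAt (fun y ↦ g a + ∫ t in a..y, φ t) (φ x) x :=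
    (hderiv (Ioo_subset_Icc_self.trans Icc_subset_uIcc hx) a left_mem_uIcc).const_add _
  refine (hg' x hx).unique (hprim.congr_of_eventuallyEq ?_)
  filter_upwards [Icc_mem_nhds hx.1 hx.2] using eq_primitive

end IntervalDerivative

section Jacobi

variable {p V u u' η η' : ℝ → ℝ}

theorem hasDerivAt_picone {r : ℝ} (hu : HasDerivAt u (u' r) r)
    (hflux : HasDerivAt (fun s ↦ p s * u' s) (-(V r * u r * p r)) r)
    (hη : HasDerivAt η (η' r) r) (hur : u r ≠ 0) :
    HasDerivAt (fun s ↦ p s * u' s / u s * η s ^ 2)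
      ((η' r ^ 2 - V r * η r ^ 2) * p r - p r * ((η' r * u r - η r * u' r) / u r) ^ 2) r := by
  refine ((hflux.fun_div hu hur).fun_mul (hη.fun_pow 2)).congr_deriv ?_
  field_simp
  ring

theorem integral_pos_of_pos_solution {a b : ℝ} (hp : ∀ r ∈ Ioo a b, 0 < p r)
    (hu : ContinuousOn u (Icc a b)) (hu_pos : ∀ r ∈ Icc a b, 0 < u r)
    (hu' : ∀ r ∈ Ioo a b, HasDerivAt u (u' r) r)
    (hflux : ContinuousOn (fun r ↦ p r * u' r) (Icc a b))
    (hflux' : ∀ r ∈ Ioo a b, HasDerivAt (fun s ↦ p s * u' s) (-(V r * u r * p r)) r)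
    (hη : ContinuousOn η (Icc a b)) (hη' : ∀ r ∈ Ioo a b, HasDerivAt η (η' r) r)
    (hint : IntervalIntegrable (fun r ↦ (η' r ^ 2 - V r * η r ^ 2) * p r) volume a b)
    (ha : p a * u' a * η a = 0) (hb : η b = 0) (hne : ∃ r ∈ Icc a b, η r ≠ 0) :
    0 < ∫ r in a..b, (η' r ^ 2 - V r * η r ^ 2) * p r := by
  obtain ⟨r₀, hr₀, hηr₀⟩ := hne
  by_contra! hnonpos
  have hu_ne : ∀ r ∈ Icc a b, u r ≠ 0 := fun r hr ↦ (hu_pos r hr).ne'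
  let g : ℝ → ℝ := fun r ↦ p r * u' r / u r * η r ^ 2
  have hgab : g b - g a = 0 := by
    have hga : g a = p a * u' a * η a * (η a / u a) := by ring
    have hgb : g b = 0 := by simp [g, hb]
    rw [hga, hgb, ha, zero_mul, sub_zero]
  have hpicone := ae_eq_of_hasDerivAt_of_le_of_integral_le_sub (g := g)
    ((hflux.div hu hu_ne).mul (hη.pow 2))
    (fun r hr ↦ hasDerivAt_picone (hu' r hr) (hflux' r hr) (hη' r hr)
      (hu_ne r (Ioo_subset_Icc_self hr)))
    (fun r hr ↦ sub_le_self _ (mul_nonneg (hp r hr).le (sq_nonneg _))) hint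
    (hnonpos.trans_eq hgab.symm)
  have hwronskian : ∀ᵐ r, r ∈ Ioo r₀ b → (η' r * u r - η r * u' r) / u r ^ 2 = 0 := by
    filter_upwards [hpicone] with r hpicone_r hr
    have hr_ab : r ∈ Ioo a b := Ioo_subset_Ioo_left hr₀.1 hr
    have hsq : ((η' r * u r - η r * u' r) / u r) ^ 2 = 0 :=
      (mul_eq_zero.1 (sub_eq_self.1 (hpicone_r hr_ab))).resolve_left (hp r hr_ab).ne'
    rw [sq, ← div_div, pow_eq_zero_iff two_ne_zero |>.1 hsq, zero_div]
  have hquot : η r₀ / u r₀ = η b / u b :=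
    eq_of_hasDerivAt_of_ae_eq_zero (f := fun r ↦ η r / u r) hr₀.2
      ((hη.div hu hu_ne).mono (Icc_subset_Icc_left hr₀.1))
      (fun r hr ↦ have hr_ab : r ∈ Ioo a b := Ioo_subset_Ioo_left hr₀.1 hr
        (hη' r hr_ab).fun_div (hu' r hr_ab) (hu_ne r (Ioo_subset_Icc_self hr_ab))) hwronskian
  rw [hb, zero_div] at hquot
  exact div_ne_zero hηr₀ (hu_ne r₀ hr₀) hquot

end Jacobi

/-- The solution of the linearized equation generated by the dilation invariance of the quintic
equation: up to the factor `2`, it is the derivative at `t = 1` of `t^{1/2} w(t r)`, where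
`w(r) = (α² + r²)^{-1/2}` is proportional to the stationary solution. -/
noncomputable def dilationMode (α r : ℝ) : ℝ := (α ^ 2 - r ^ 2) / √(α ^ 2 + r ^ 2) ^ 3

/-- The radial derivative of `dilationMode α`, in closed form. -/
noncomputable def dilationModeDeriv (α r : ℝ) : ℝ :=
  -(r * (5 * α ^ 2 - r ^ 2)) / √(α ^ 2 + r ^ 2) ^ 5

section DilationMode

variable {α : ℝ}

theorem dilationMode_pos {r : ℝ} (hr : |r| < |α|) : 0 < dilationMode α r := by
  have hnum : 0 < α ^ 2 - r ^ 2 := sub_pos.2 (sq_lt_sq.2 hr)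
  have hα : α ≠ 0 := abs_pos.1 ((abs_nonneg r).trans_lt hr)
  unfold dilationMode
  positivity

theorem hasDerivAt_sqrt_sq_add_sq (hα : α ≠ 0) (r : ℝ) :
    HasDerivAt (fun s ↦ √(α ^ 2 + s ^ 2)) (r / √(α ^ 2 + r ^ 2)) r := by
  have hpos : 0 < α ^ 2 + r ^ 2 := by positivity
  refine (((hasDerivAt_pow 2 r).const_add (α ^ 2)).sqrt hpos.ne').congr_deriv ?_
  field_simp
  norm_num

theorem hasDerivAt_dilationMode (hα : α ≠ 0) (r : ℝ) :
    HasDerivAt (dilationMode α) (dilationModeDeriv α r) r := by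
  have hs : √(α ^ 2 + r ^ 2) ≠ 0 := by positivity
  have hα_sq : α ^ 2 = √(α ^ 2 + r ^ 2) ^ 2 - r ^ 2 :=
    eq_sub_of_add_eq (Real.sq_sqrt (by positivity)).symm
  have hnum : HasDerivAt (fun s ↦ α ^ 2 - s ^ 2) (-(2 * r)) r := by
    simpa using (hasDerivAt_pow 2 r).const_sub (α ^ 2)
  refine (hnum.fun_div ((hasDerivAt_sqrt_sq_add_sq hα r).fun_pow 3)
    (pow_ne_zero 3 hs)).congr_deriv ?_
  unfold dilationModeDeriv
  generalize √(α ^ 2 + r ^ 2) = s at hs hα_sq ⊢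
  rw [hα_sq]
  field_simp
  ring

theorem hasDerivAt_sq_mul_dilationModeDeriv (hα : α ≠ 0) (r : ℝ) :
    HasDerivAt (fun s ↦ s ^ 2 * dilationModeDeriv α s)
      (-(15 * (α / (α ^ 2 + r ^ 2)) ^ 2 * dilationMode α r * r ^ 2)) r := by
  have hs : √(α ^ 2 + r ^ 2) ≠ 0 := by positivity
  have hs_sq : √(α ^ 2 + r ^ 2) ^ 2 = α ^ 2 + r ^ 2 := Real.sq_sqrt (by positivity)
  have hnum : HasDerivAt (fun s ↦ -(s * (5 * α ^ 2 - s ^ 2))) (-(5 * α ^ 2 - 3 * r ^ 2)) r := by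
    refine ((hasDerivAt_id' r).fun_mul
      ((hasDerivAt_pow 2 r).const_sub (5 * α ^ 2))).fun_neg.congr_deriv ?_
    ring
  refine ((hasDerivAt_pow 2 r).fun_mul (hnum.fun_div
    ((hasDerivAt_sqrt_sq_add_sq hα r).fun_pow 5) (pow_ne_zero 5 hs))).congr_deriv ?_
  have hα_sq : α ^ 2 = √(α ^ 2 + r ^ 2) ^ 2 - r ^ 2 := eq_sub_of_add_eq hs_sq.symm
  rw [dilationMode, ← hs_sq]
  simp only [Real.sqrt_sq (Real.sqrt_nonneg _)]
  generalize √(α ^ 2 + r ^ 2) = s at hs hα_sq ⊢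
  rw [div_pow, hα_sq]
  field_simp
  ring

end DilationMode

theorem intervalIntegrable_rayleigh_integrand {α a b : ℝ} (hα : α ≠ 0) (hab : a ≤ b)
    {η η' : ℝ → ℝ} (hη : ContinuousOn η (Icc a b)) (hη' : ContinuousOn η' (Icc a b)) :
    IntervalIntegrable
      (fun r ↦ (η' r ^ 2 - 15 * (α / (α ^ 2 + r ^ 2)) ^ 2 * η r ^ 2) * r ^ 2) volume a b := by
  have hdiv : ContinuousOn (fun r ↦ α / (α ^ 2 + r ^ 2)) (Icc a b) :=
    continuousOn_const.div (by fun_prop) fun r _ ↦ by positivity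
  exact ContinuousOn.intervalIntegrable_of_Icc hab (by fun_prop)

theorem lower_branch_stable_general {α R : ℝ} (hα : R < |α|) {η η' : ℝ → ℝ}
    (hη : ContinuousOn η (Icc 0 R)) (hη' : ∀ r ∈ Ioo 0 R, HasDerivAt η (η' r) r)
    (hint : IntervalIntegrable
      (fun r ↦ (η' r ^ 2 - 15 * (α / (α ^ 2 + r ^ 2)) ^ 2 * η r ^ 2) * r ^ 2) volume 0 R)
    (hηbc : η R = 0) (hηne : ∃ r ∈ Icc 0 R, η r ≠ 0) :
    0 < ∫ r in (0 : ℝ)..R,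
      (η' r ^ 2 - 15 * (α / (α ^ 2 + r ^ 2)) ^ 2 * η r ^ 2) * r ^ 2 := by
  have hR : 0 ≤ R := hηne.elim fun r hr ↦ hr.1.1.trans hr.1.2
  have hα0 : α ≠ 0 := abs_pos.1 (hR.trans_lt hα)
  exact integral_pos_of_pos_solution (p := fun r ↦ r ^ 2) (u := dilationMode α)
    (u' := dilationModeDeriv α) (V := fun r ↦ 15 * (α / (α ^ 2 + r ^ 2)) ^ 2)
    (fun r hr ↦ pow_pos hr.1 2)
    (fun r _ ↦ (hasDerivAt_dilationMode hα0 r).continuousAt.continuousWithinAt)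
    (fun r hr ↦ dilationMode_pos ((abs_of_nonneg hr.1).trans_le hr.2 |>.trans_lt hα))
    (fun r _ ↦ hasDerivAt_dilationMode hα0 r)
    (fun r _ ↦ (hasDerivAt_sq_mul_dilationModeDeriv hα0 r).continuousAt.continuousWithinAt)
    (fun r _ ↦ hasDerivAt_sq_mul_dilationModeDeriv hα0 r)
    hη hη' hint (by simp) hηbc hηne

/-- Stability of the lower branch: for every `α > 1` (lower branch of solutions of
the radial Lichnerowicz–York equation, with linearized potential `15(α/(α²+r²))²`)
and every continuously differentiable `η` with `η(1) = 0` not identically zero,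
the Rayleigh numerator `∫₀¹ (η'² − 15(α/(α²+r²))² η²) r² dr` is strictly positive,
i.e. the principal eigenvalue of the linearization is strictly positive. -/
theorem lower_branch_stable (α : ℝ) (hα : 1 < α) (η η' : ℝ → ℝ)
    (hη : ∀ r ∈ Set.Icc (0 : ℝ) 1, HasDerivAt η (η' r) r)
    (hη' : ContinuousOn η' (Set.Icc 0 1))
    (hηbc : η 1 = 0)
    (hηne : ∃ r ∈ Set.Icc (0 : ℝ) 1, η r ≠ 0) :
    0 < ∫ r in (0 : ℝ)..1,
      (η' r ^ 2 - 15 * (α / (α ^ 2 + r ^ 2)) ^ 2 * η r ^ 2) * r ^ 2 := by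
  have hηc : ContinuousOn η (Icc 0 1) := HasDerivAt.continuousOn hη
  exact lower_branch_stable_general (hα.trans_le (le_abs_self α)) hηc
    (fun r hr ↦ hη r (Ioo_subset_Icc_self hr))
    (intervalIntegrable_rayleigh_integrand (by positivity) zero_le_one hηc hη') hηbc hηne
end

section
/- For every α with 0 < α < 1, the trial function η_T(r) = (1−r²)/(α²+r²)^{3/2} is continuously differentiable on [0,1], satisfies η_T(1) = 0 and η_T'(0) = 0, is not identically zero, and satisfies ∫₀¹ (η_T'(r)² − 15·(α/(α²+r²))²·η_T(r)²)·r² dr < 0. Consequently the principal eigenvalue of the linearization of the radial Lichnerowicz–York equation at the upper-branch solution φ_α is strictly negative, i.e., the upper branch of solutions is unstable. -/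
/-- The trial function `η_T(r) = (1−r²)/(α²+r²)^{3/2}`. -/
noncomputable def etaT (α r : ℝ) : ℝ := (1 - r ^ 2) / (α ^ 2 + r ^ 2) ^ ((3 : ℝ) / 2)

/-!
On `(0, 1)` the trial function `η = etaT α` is positive, and it is a strict subsolution of the
linearized equation. With `s = α² + r²` we have `η = (1 + α²) s^(-3/2) - s^(-1/2)`, and the
operator `L = r⁻² ∂ᵣ (r² ∂ᵣ) + 15 α² / s²` sends `s^(-3/2)` to `6 s^(-5/2)` and `s^(-1/2)` to
`12 α² s^(-5/2)`, so that `L η = 6 (1 - α²) s^(-5/2) > 0`. Integrating by parts, the boundary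
terms `r² η η'` vanish at `0` and `1`, and the Rayleigh numerator equals `-∫ η (L η) r² dr < 0`.
-/

section SturmLiouville

variable {a b : ℝ} {η η' w V f : ℝ → ℝ}

/-- The hypothesis `hflux` is the equation `(w η')' + w V η = w f`. -/
lemma integral_deriv_sq_sub_potential_mul_sq_eq
    (hη : ∀ r ∈ Set.uIcc a b, HasDerivAt η (η' r) r)
    (hflux : ∀ r ∈ Set.uIcc a b,
      HasDerivAt (fun x ↦ w x * η' x) (w r * (f r - V r * η r)) r)
    (hη' : IntervalIntegrable η' MeasureTheory.volume a b)
    (hV : IntervalIntegrable (fun r ↦ w r * V r) MeasureTheory.volume a b)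
    (hf : IntervalIntegrable (fun r ↦ w r * f r) MeasureTheory.volume a b) :
    ∫ r in a..b, (η' r ^ 2 - V r * η r ^ 2) * w r =
      η b * (w b * η' b) - η a * (w a * η' a) - ∫ r in a..b, η r * (w r * f r) := by
  have hη_cont : ContinuousOn η (Set.uIcc a b) := HasDerivAt.continuousOn hη
  have hflux_cont : ContinuousOn (fun r ↦ w r * η' r) (Set.uIcc a b) :=
    HasDerivAt.continuousOn hflux
  have hVη : IntervalIntegrable (fun r ↦ w r * V r * η r) MeasureTheory.volume a b :=
    hV.mul_continuousOn hη_cont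
  have hflux' : IntervalIntegrable (fun r ↦ w r * (f r - V r * η r))
      MeasureTheory.volume a b :=
    (hf.sub hVη).congr fun r _ ↦ by ring
  have hηf := hf.continuousOn_mul hη_cont
  have htotal := (hη'.mul_continuousOn hflux_cont).add (hflux'.continuousOn_mul hη_cont)
  rw [← intervalIntegral.integral_deriv_mul_eq_sub hη hflux hη' hflux',
    ← intervalIntegral.integral_sub htotal hηf]
  congr with r
  ring

lemma integral_deriv_sq_sub_potential_mul_sq_neg (hab : a < b)
    (hη : ∀ r ∈ Set.Icc a b, HasDerivAt η (η' r) r)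
    (hflux : ∀ r ∈ Set.Icc a b,
      HasDerivAt (fun x ↦ w x * η' x) (w r * (f r - V r * η r)) r)
    (hη' : IntervalIntegrable η' MeasureTheory.volume a b)
    (hV : IntervalIntegrable (fun r ↦ w r * V r) MeasureTheory.volume a b)
    (hf : IntervalIntegrable (fun r ↦ w r * f r) MeasureTheory.volume a b)
    (hboundary : η b * (w b * η' b) ≤ η a * (w a * η' a))
    (hpos : ∀ r ∈ Set.Ioo a b, 0 < η r * (w r * f r)) :
    ∫ r in a..b, (η' r ^ 2 - V r * η r ^ 2) * w r < 0 := by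
  rw [← Set.uIcc_of_le hab.le] at hη hflux
  have hηf : 0 < ∫ r in a..b, η r * (w r * f r) :=
    intervalIntegral.intervalIntegral_pos_of_pos_on
      (hf.continuousOn_mul (HasDerivAt.continuousOn hη)) hpos hab
  rw [integral_deriv_sq_sub_potential_mul_sq_eq hη hflux hη' hV hf]
  linarith

end SturmLiouville

section RadialPowers

variable {c r : ℝ}

lemma hasDerivAt_add_sq_rpow (h : c + r ^ 2 ≠ 0) (p : ℝ) :
    HasDerivAt (fun x ↦ (c + x ^ 2) ^ p) (2 * p * r * (c + r ^ 2) ^ (p - 1)) r := by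
  have hbase : HasDerivAt (fun x ↦ c + x ^ 2) (2 * r) r := by
    simpa using (hasDerivAt_pow 2 r).const_add c
  exact (hbase.rpow_const (Or.inl h)).congr_deriv (by ring)

/-- With `n = d - 1` this is the radial Laplacian of `(c + r²) ^ p` in dimension `d`, times the
weight `r ^ n`. -/
lemma hasDerivAt_pow_mul_deriv_add_sq_rpow (h : c + r ^ 2 ≠ 0) (n : ℕ) (p : ℝ) :
    HasDerivAt (fun x ↦ x ^ n * (2 * p * x * (c + x ^ 2) ^ (p - 1)))
      (r ^ n * (2 * p * (n + 2 * p - 1) * (c + r ^ 2) ^ (p - 1)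
        - 4 * p * (p - 1) * c * (c + r ^ 2) ^ (p - 2))) r := by
  have hprod := ((hasDerivAt_pow (n + 1) r).const_mul (2 * p)).mul
    (hasDerivAt_add_sq_rpow h (p - 1))
  have hpow : (c + r ^ 2) ^ (p - 1) = (c + r ^ 2) ^ (p - 2) * (c + r ^ 2) := by
    rw [← Real.rpow_add_one h]
    ring_nf
  refine (hprod.congr_deriv ?_).congr_of_eventuallyEq (.of_forall fun x ↦ ?_)
  · rw [sub_sub p 1 1, one_add_one_eq_two, hpow, Nat.add_sub_cancel]
    push_cast
    ring
  · simp only [Pi.mul_apply]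
    ring

lemma hasDerivAt_sq_mul_deriv_add_sq_rpow_neg_three_halves (h : c + r ^ 2 ≠ 0) :
    HasDerivAt (fun x ↦ x ^ 2 * (2 * (-(3 / 2)) * x * (c + x ^ 2) ^ (-(3 / 2) - 1 : ℝ)))
      (r ^ 2 * (6 * (c + r ^ 2) ^ (-(5 / 2) : ℝ)
        - 15 * c / (c + r ^ 2) ^ 2 * (c + r ^ 2) ^ (-(3 / 2) : ℝ))) r := by
  have hpow : (c + r ^ 2) ^ (-(3 / 2) - 2 : ℝ) = (c + r ^ 2) ^ (-(3 / 2) : ℝ) / (c + r ^ 2) ^ 2 :=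
    mod_cast Real.rpow_sub_natCast h (-(3 / 2)) 2
  refine (hasDerivAt_pow_mul_deriv_add_sq_rpow h 2 (-(3 / 2))).congr_deriv ?_
  rw [hpow, show (-(3 / 2) - 1 : ℝ) = -(5 / 2) by norm_num]
  push_cast
  ring

lemma hasDerivAt_sq_mul_deriv_add_sq_rpow_neg_one_half (h : c + r ^ 2 ≠ 0) :
    HasDerivAt (fun x ↦ x ^ 2 * (2 * (-(1 / 2)) * x * (c + x ^ 2) ^ (-(1 / 2) - 1 : ℝ)))
      (r ^ 2 * (12 * c * (c + r ^ 2) ^ (-(5 / 2) : ℝ)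
        - 15 * c / (c + r ^ 2) ^ 2 * (c + r ^ 2) ^ (-(1 / 2) : ℝ))) r := by
  have hpow : (c + r ^ 2) ^ (-(1 / 2) - 2 : ℝ) = (c + r ^ 2) ^ (-(1 / 2) : ℝ) / (c + r ^ 2) ^ 2 :=
    mod_cast Real.rpow_sub_natCast h (-(1 / 2)) 2
  refine (hasDerivAt_pow_mul_deriv_add_sq_rpow h 2 (-(1 / 2))).congr_deriv ?_
  rw [show (-(5 / 2) : ℝ) = -(1 / 2) - 2 by norm_num, hpow]
  push_cast
  ring

end RadialPowers

section TrialFunction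

variable {α : ℝ}

lemma sq_add_sq_pos (hα : α ≠ 0) (r : ℝ) : 0 < α ^ 2 + r ^ 2 := by positivity

lemma etaT_one (α : ℝ) : etaT α 1 = 0 := by simp [etaT]

lemma etaT_pos (hα : α ≠ 0) {r : ℝ} (hr : r ^ 2 < 1) : 0 < etaT α r :=
  div_pos (sub_pos.2 hr) (Real.rpow_pos_of_pos (sq_add_sq_pos hα r) _)

lemma contDiff_etaT (hα : α ≠ 0) {n : WithTop ℕ∞} : ContDiff ℝ n (etaT α) := by
  have hs := sq_add_sq_pos hα
  unfold etaT
  exact ContDiff.div (by fun_prop)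
    (ContDiff.rpow_const_of_ne (by fun_prop) fun r ↦ (hs r).ne')
    fun r ↦ (Real.rpow_pos_of_pos (hs r) _).ne'

lemma etaT_eq_rpow_sub_rpow (hα : α ≠ 0) (r : ℝ) :
    etaT α r = (1 + α ^ 2) * (α ^ 2 + r ^ 2) ^ (-(3 / 2) : ℝ)
      - (α ^ 2 + r ^ 2) ^ (-(1 / 2) : ℝ) := by
  have hs := sq_add_sq_pos hα r
  have hpow : (α ^ 2 + r ^ 2) ^ (-(1 / 2) : ℝ)
      = (α ^ 2 + r ^ 2) ^ (-(3 / 2) : ℝ) * (α ^ 2 + r ^ 2) := by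
    rw [← Real.rpow_add_one hs.ne']
    norm_num
  rw [hpow, etaT, div_eq_mul_inv, ← Real.rpow_neg hs.le]
  ring

lemma hasDerivAt_etaT (hα : α ≠ 0) (r : ℝ) :
    HasDerivAt (etaT α)
      ((1 + α ^ 2) * (2 * (-(3 / 2)) * r * (α ^ 2 + r ^ 2) ^ (-(3 / 2) - 1 : ℝ))
        - 2 * (-(1 / 2)) * r * (α ^ 2 + r ^ 2) ^ (-(1 / 2) - 1 : ℝ)) r := by
  have hs := (sq_add_sq_pos hα r).ne'
  exact (((hasDerivAt_add_sq_rpow hs _).const_mul _).sub (hasDerivAt_add_sq_rpow hs _)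
    ).congr_of_eventuallyEq (.of_forall (etaT_eq_rpow_sub_rpow hα))

lemma hasDerivAt_sq_mul_deriv_etaT (hα : α ≠ 0) (r : ℝ) :
    HasDerivAt (fun x ↦ x ^ 2 * deriv (etaT α) x)
      (r ^ 2 * (6 * (1 - α ^ 2) * (α ^ 2 + r ^ 2) ^ (-(5 / 2) : ℝ)
        - 15 * (α / (α ^ 2 + r ^ 2)) ^ 2 * etaT α r)) r := by
  have hs := (sq_add_sq_pos hα r).ne'
  have hsum := ((hasDerivAt_sq_mul_deriv_add_sq_rpow_neg_three_halves hs).const_mul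
    (1 + α ^ 2)).sub (hasDerivAt_sq_mul_deriv_add_sq_rpow_neg_one_half hs)
  refine (hsum.congr_deriv ?_).congr_of_eventuallyEq (.of_forall fun x ↦ ?_)
  · rw [etaT_eq_rpow_sub_rpow hα, div_pow]
    ring
  · simp only [Pi.sub_apply, (hasDerivAt_etaT hα x).deriv]
    ring

lemma integral_rayleigh_etaT_neg (hα : α ≠ 0) (hα1 : α ^ 2 < 1) :
    ∫ r in (0 : ℝ)..1,
      (deriv (etaT α) r ^ 2 - 15 * (α / (α ^ 2 + r ^ 2)) ^ 2 * etaT α r ^ 2) * r ^ 2 < 0 := by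
  have hs := sq_add_sq_pos hα
  have hη : ContDiff ℝ 1 (etaT α) := contDiff_etaT hα
  have hV : Continuous fun r ↦ r ^ 2 * (15 * (α / (α ^ 2 + r ^ 2)) ^ 2) := by
    fun_prop (disch := exact fun r ↦ (hs r).ne')
  have hf : Continuous fun r ↦
      r ^ 2 * (6 * (1 - α ^ 2) * (α ^ 2 + r ^ 2) ^ (-(5 / 2) : ℝ)) := by
    have hpow : Continuous fun r ↦ (α ^ 2 + r ^ 2) ^ (-(5 / 2) : ℝ) :=
      Continuous.rpow_const (by fun_prop) fun r ↦ Or.inl (hs r).ne'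
    fun_prop
  refine integral_deriv_sq_sub_potential_mul_sq_neg one_pos
    (fun r _ ↦ (hη.differentiable one_ne_zero r).hasDerivAt)
    (fun r _ ↦ hasDerivAt_sq_mul_deriv_etaT hα r)
    ((hη.continuous_deriv le_rfl).intervalIntegrable 0 1)
    (hV.intervalIntegrable 0 1) (hf.intervalIntegrable 0 1) (by simp [etaT_one]) fun r hr ↦ ?_
  have hη_pos : 0 < etaT α r := etaT_pos hα (pow_lt_one₀ hr.1.le hr.2 two_ne_zero)
  have hf_pos : 0 < 6 * (1 - α ^ 2) * (α ^ 2 + r ^ 2) ^ (-(5 / 2) : ℝ) :=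
    mul_pos (mul_pos (by norm_num) (sub_pos.2 hα1)) (Real.rpow_pos_of_pos (hs r) _)
  exact mul_pos hη_pos (mul_pos (pow_pos hr.1 2) hf_pos)

end TrialFunction

/-- Instability of the upper branch: for `0 < α < 1`, the trial function
`η_T(r) = (1−r²)/(α²+r²)^{3/2}` is continuously differentiable on `[0,1]`, satisfies
`η_T(1) = 0`, `η_T'(0) = 0`, is not identically zero, and has strictly negative
Rayleigh numerator `∫₀¹ (η_T'² − 15(α/(α²+r²))² η_T²) r² dr < 0`; hence the principal
eigenvalue of the linearization at the upper-branch solution `φ_α` is negative. -/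
theorem upper_branch_unstable (α : ℝ) (hα0 : 0 < α) (hα1 : α < 1) :
    ContDiffOn ℝ 1 (etaT α) (Set.Icc 0 1) ∧
    etaT α 1 = 0 ∧
    HasDerivAt (etaT α) 0 0 ∧
    (∃ r ∈ Set.Icc (0 : ℝ) 1, etaT α r ≠ 0) ∧
    (∫ r in (0 : ℝ)..1,
      (deriv (etaT α) r ^ 2 - 15 * (α / (α ^ 2 + r ^ 2)) ^ 2 * etaT α r ^ 2) * r ^ 2)
      < 0 := by
  have hα : α ≠ 0 := hα0.ne'
  exact ⟨(contDiff_etaT hα).contDiffOn, etaT_one α, by simpa using hasDerivAt_etaT hα 0,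
    ⟨0, by simp, (etaT_pos hα (by simp)).ne'⟩,
    integral_rayleigh_etaT_neg hα (pow_lt_one₀ hα0.le hα1 two_ne_zero)⟩
end

section
/- Let ρ > 0 and suppose φ : [0,1] → ℝ is continuously differentiable on [0,1], twice differentiable on (0,1], satisfies φ'' + (2/r)φ' + 2πρφ^5 = 0 on (0,1] with φ(1) = 1 and φ'(0) = 0, and let θ : [0,1] → ℝ be continuously differentiable on [0,1], twice differentiable on (0,1], satisfying θ'' + (2/r)θ' + 10πρφ^4 θ = −μθ on (0,1] with θ(1) = 0 and θ'(0) = 0, for some μ ∈ ℝ. Then, writing u = φ − 1, the identity 2π·∫₀¹ ρ·φ(r)^4·θ(r)·(4u(r) − 1)·r² dr = −μ·∫₀¹ θ(r)·u(r)·r² dr holds. -/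
/-!
Multiplication by `r ^ k` turns the radial Laplacian `u'' + (k / r) u'` in dimension `k + 1` into
the self-adjoint expression `(r ^ k u')'`. Green's identity for `φ - c` and `θ`, where `c` is
the boundary value of `φ`, has no boundary terms: at the outer radius both functions vanish, at the
origin the weight does.
-/

open Set MeasureTheory

theorem integral_lagrange_identity {A : Type*} [NormedCommRing A] [NormedAlgebra ℝ A]
    [CompleteSpace A] {a b : ℝ} {p u u' v v' Lu Lv : ℝ → A} (hab : a ≤ b)
    (hu_cont : ContinuousOn u (Icc a b)) (hv_cont : ContinuousOn v (Icc a b))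
    (hpu_cont : ContinuousOn (fun x ↦ p x * u' x) (Icc a b))
    (hpv_cont : ContinuousOn (fun x ↦ p x * v' x) (Icc a b))
    (hu : ∀ x ∈ Ioo a b, HasDerivAt u (u' x) x)
    (hv : ∀ x ∈ Ioo a b, HasDerivAt v (v' x) x)
    (hLu : ∀ x ∈ Ioo a b, HasDerivAt (fun y ↦ p y * u' y) (Lu x) x)
    (hLv : ∀ x ∈ Ioo a b, HasDerivAt (fun y ↦ p y * v' y) (Lv x) x)
    (hintegrable : IntervalIntegrable (fun x ↦ u x * Lv x - v x * Lu x) volume a b) :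
    ∫ x in a..b, (u x * Lv x - v x * Lu x) =
      (u b * (p b * v' b) - v b * (p b * u' b)) -
        (u a * (p a * v' a) - v a * (p a * u' a)) := by
  refine intervalIntegral.integral_eq_sub_of_hasDerivAt_of_le
    (f := fun x ↦ u x * (p x * v' x) - v x * (p x * u' x)) hab
    ((hu_cont.mul hpv_cont).sub (hv_cont.mul hpu_cont)) (fun x hx ↦ ?_) hintegrable
  refine (((hu x hx).mul (hLv x hx)).sub ((hv x hx).mul (hLu x hx))).congr_deriv ?_
  ring

theorem hasDerivAt_pow_mul_of_hasDerivAt_sub_div_mul {𝕜 : Type*} [NontriviallyNormedField 𝕜]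
    (k : ℕ) {w : 𝕜 → 𝕜} {r f : 𝕜} (hr : r ≠ 0) (hw : HasDerivAt w (f - k / r * w r) r) :
    HasDerivAt (fun s ↦ s ^ k * w s) (r ^ k * f) r := by
  have hpow : (k : 𝕜) * r ^ (k - 1) = r ^ k * (k / r) := by
    cases k with
    | zero => simp
    | succ k =>
      rw [Nat.add_sub_cancel, pow_succ]
      field_simp
  refine ((hasDerivAt_pow k r).mul hw).congr_deriv ?_
  rw [hpow]
  ring

/-- `u`, with derivative `u'`, solves the radial Poisson equation `u'' + (k / r) u' = f` on
`(0, R)` and is continuously differentiable up to both endpoints. The natural number `k` is the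
dimension minus one, so that `r ^ k dr` is the radial volume element; the second derivative is
eliminated by means of the equation. -/
structure IsRadialPoissonSolution (k : ℕ) (R : ℝ) (u u' f : ℝ → ℝ) : Prop where
  continuousOn : ContinuousOn u (Icc 0 R)
  continuousOn_deriv : ContinuousOn u' (Icc 0 R)
  hasDerivAt : ∀ r ∈ Ioo 0 R, HasDerivAt u (u' r) r
  hasDerivAt_deriv : ∀ r ∈ Ioo 0 R, HasDerivAt u' (f r - k / r * u' r) r

namespace IsRadialPoissonSolution

variable {k : ℕ} {R : ℝ} {u u' v v' f g : ℝ → ℝ}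

theorem of_deriv (hu : DifferentiableOn ℝ u (Icc 0 R))
    (hu' : ContinuousOn (deriv u) (Icc 0 R)) (hu'' : DifferentiableOn ℝ (deriv u) (Ioo 0 R))
    (heq : ∀ r ∈ Ioo 0 R, deriv (deriv u) r + k / r * deriv u r = f r) :
    IsRadialPoissonSolution k R u (deriv u) f where
  continuousOn := hu.continuousOn
  continuousOn_deriv := hu'
  hasDerivAt _ hr := hu.hasDerivAt (Icc_mem_nhds hr.1 hr.2)
  hasDerivAt_deriv r hr :=
    (hu''.hasDerivAt (Ioo_mem_nhds hr.1 hr.2)).congr_deriv (eq_sub_of_add_eq (heq r hr))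

theorem sub_const (hu : IsRadialPoissonSolution k R u u' f) (c : ℝ) :
    IsRadialPoissonSolution k R (fun r ↦ u r - c) u' f where
  continuousOn := hu.continuousOn.sub continuousOn_const
  continuousOn_deriv := hu.continuousOn_deriv
  hasDerivAt r hr := (hu.hasDerivAt r hr).sub_const c
  hasDerivAt_deriv := hu.hasDerivAt_deriv

theorem hasDerivAt_pow_mul_deriv (hu : IsRadialPoissonSolution k R u u' f) {r : ℝ}
    (hr : r ∈ Ioo 0 R) : HasDerivAt (fun s ↦ s ^ k * u' s) (r ^ k * f r) r :=
  hasDerivAt_pow_mul_of_hasDerivAt_sub_div_mul k hr.1.ne' (hu.hasDerivAt_deriv r hr)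

theorem continuousOn_pow_mul_deriv (hu : IsRadialPoissonSolution k R u u' f) :
    ContinuousOn (fun r ↦ r ^ k * u' r) (Icc 0 R) :=
  (continuousOn_pow k).mul hu.continuousOn_deriv

theorem integral_green_identity (hu : IsRadialPoissonSolution k R u u' f)
    (hv : IsRadialPoissonSolution k R v v' g) (hk : k ≠ 0) (hR : 0 ≤ R)
    (hintegrable : IntervalIntegrable
      (fun r ↦ u r * (r ^ k * g r) - v r * (r ^ k * f r)) volume 0 R) :
    ∫ r in 0..R, (u r * (r ^ k * g r) - v r * (r ^ k * f r)) =
      R ^ k * (u R * v' R - v R * u' R) := by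
  rw [integral_lagrange_identity hR hu.continuousOn hv.continuousOn
    hu.continuousOn_pow_mul_deriv hv.continuousOn_pow_mul_deriv hu.hasDerivAt hv.hasDerivAt
    (fun _ ↦ hu.hasDerivAt_pow_mul_deriv) (fun _ ↦ hv.hasDerivAt_pow_mul_deriv) hintegrable,
    zero_pow hk]
  ring

end IsRadialPoissonSolution

theorem stability_integral_identity_general {k : ℕ} {R c μ : ℝ} {ρ φ φ' θ θ' : ℝ → ℝ} (m : ℕ)
    (hk : k ≠ 0) (hR : 0 ≤ R) (hρ : ContinuousOn ρ (Icc 0 R))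
    (hφ : IsRadialPoissonSolution k R φ φ' fun r ↦ -(2 * Real.pi * ρ r * φ r ^ (m + 1)))
    (hφR : φ R = c)
    (hθ : IsRadialPoissonSolution k R θ θ' fun r ↦
      -μ * θ r - 2 * (m + 1) * Real.pi * ρ r * φ r ^ m * θ r)
    (hθR : θ R = 0) :
    2 * Real.pi * ∫ r in 0..R, ρ r * φ r ^ m * θ r * (m * (φ r - c) - c) * r ^ k =
      -μ * ∫ r in 0..R, θ r * (φ r - c) * r ^ k := by
  have hφ_cont := hφ.continuousOn
  have hθ_cont := hθ.continuousOn
  have hpotential : IntervalIntegrable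
      (fun r ↦ 2 * Real.pi * (ρ r * φ r ^ m * θ r * (m * (φ r - c) - c) * r ^ k)) volume 0 R :=
    ContinuousOn.intervalIntegrable_of_Icc hR (by fun_prop)
  have heigen : IntervalIntegrable (fun r ↦ -μ * (θ r * (φ r - c) * r ^ k)) volume 0 R :=
    ContinuousOn.intervalIntegrable_of_Icc hR (by fun_prop)
  have hgreen := (hφ.sub_const c).integral_green_identity hθ hk hR
    (ContinuousOn.intervalIntegrable_of_Icc hR (by fun_prop))
  rw [hφR, hθR, sub_self, zero_mul, zero_mul, sub_self, mul_zero] at hgreen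
  rw [eq_comm, ← sub_eq_zero, ← intervalIntegral.integral_const_mul,
    ← intervalIntegral.integral_const_mul, ← intervalIntegral.integral_sub heigen hpotential,
    ← hgreen]
  congr with r
  ring

/-- If `φ` solves the radial Lichnerowicz–York equation
`φ'' + (2/r)φ' + 2πρφ⁵ = 0` on `(0,1]` with `φ(1) = 1`, `φ'(0) = 0`, and `θ` is an
eigenfunction of the linearization, `θ'' + (2/r)θ' + 10πρφ⁴θ = −μθ` with `θ(1) = 0`,
`θ'(0) = 0`, then with `u = φ − 1` the identity
`2π ∫₀¹ ρ φ⁴ θ (4u − 1) r² dr = −μ ∫₀¹ θ u r² dr` holds. -/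
theorem stability_integral_identity (ρ : ℝ) (hρ : 0 < ρ) (φ θ : ℝ → ℝ) (μ : ℝ)
    (hφ1 : DifferentiableOn ℝ φ (Set.Icc 0 1))
    (hφ1' : ContinuousOn (deriv φ) (Set.Icc 0 1))
    (hφ2 : DifferentiableOn ℝ (deriv φ) (Set.Ioc 0 1))
    (hφode : ∀ r ∈ Set.Ioc (0 : ℝ) 1,
      deriv (deriv φ) r + (2 / r) * deriv φ r + 2 * Real.pi * ρ * φ r ^ 5 = 0)
    (hφbc1 : φ 1 = 1) (hφbc0 : deriv φ 0 = 0)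
    (hθ1 : DifferentiableOn ℝ θ (Set.Icc 0 1))
    (hθ1' : ContinuousOn (deriv θ) (Set.Icc 0 1))
    (hθ2 : DifferentiableOn ℝ (deriv θ) (Set.Ioc 0 1))
    (hθode : ∀ r ∈ Set.Ioc (0 : ℝ) 1,
      deriv (deriv θ) r + (2 / r) * deriv θ r + 10 * Real.pi * ρ * φ r ^ 4 * θ r
        = -μ * θ r)
    (hθbc1 : θ 1 = 0) (hθbc0 : deriv θ 0 = 0) :
    2 * Real.pi * ∫ r in (0 : ℝ)..1,
        ρ * φ r ^ 4 * θ r * (4 * (φ r - 1) - 1) * r ^ 2 =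
      -μ * ∫ r in (0 : ℝ)..1, θ r * (φ r - 1) * r ^ 2 := by
  have hIoo : Ioo (0 : ℝ) 1 ⊆ Ioc 0 1 := Ioo_subset_Ioc_self
  have hφ : IsRadialPoissonSolution 2 1 φ (deriv φ) fun r ↦ -(2 * Real.pi * ρ * φ r ^ 5) :=
    .of_deriv hφ1 hφ1' (hφ2.mono hIoo) fun r hr ↦
      eq_neg_of_add_eq_zero_left (hφode r (hIoo hr))
  have hθ : IsRadialPoissonSolution 2 1 θ (deriv θ) fun r ↦
      -μ * θ r - 2 * ((4 : ℕ) + 1) * Real.pi * ρ * φ r ^ 4 * θ r :=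
    .of_deriv hθ1 hθ1' (hθ2.mono hIoo) fun r hr ↦ by
      push_cast
      linear_combination hθode r (hIoo hr)
  exact mod_cast stability_integral_identity_general (ρ := fun _ ↦ ρ) 4 two_ne_zero
    zero_le_one continuousOn_const hφ hφbc1 hθ hθbc1
end
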